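/- arXiv:1112.2334 — 5 statements merged into one kernel-verified Lean document; each statement's English description precedes it below -/
import Mathlib

section
/- Let d ≥ 2, k ≥ 1 and ℓ : Fin k → ℝ with ℓ i > 0 for all i, and let φ be the work map of the open k-chain. If u ∈ (S^{d-1})^k is not aligned, then φ is a submersion at u: the image of the manifold derivative (mfderiv) of φ at u is the whole tangent space EuclideanSpace ℝ (Fin d). -/
open scoped Manifold BigOperators
open Metric

/-!
The image of the differential of the work map at `u` is the sum of the hyperplanes `(u i)ᗮ` over
the links with `ℓ i ≠ 0`, because link `i` alone moves the endpoint through `ℓ i • T_{u i} S`.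
Its orthogonal complement is therefore the intersection of the lines `ℝ ∙ u i`, and this is nonzero
exactly when some unit vector `w` satisfies `u i = ± w` for all these links.
-/

section LinearAlgebra

theorem range_sum_comp_proj {R M ι : Type*} {φ : ι → Type*} [Semiring R] [Fintype ι]
    [TopologicalSpace M] [AddCommMonoid M] [ContinuousAdd M] [Module R M]
    [∀ i, TopologicalSpace (φ i)] [∀ i, AddCommMonoid (φ i)] [∀ i, Module R (φ i)]
    (f : ∀ i, φ i →L[R] M) :
    (∑ i, f i ∘L ContinuousLinearMap.proj i).range = ⨆ i, (f i).range := by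
  classical
  have comp_single (i : ι) :
      (∑ j, f j ∘L ContinuousLinearMap.proj j).toLinearMap ∘ₗ LinearMap.single R φ i = f i := by
    ext x
    simpa using Fintype.sum_eq_single (f := fun j ↦ f j (Pi.single i x j)) i
      fun j hj ↦ by rw [Pi.single_eq_of_ne hj, map_zero]
  rw [LinearMap.range_eq_map, ← LinearMap.iSup_range_single, Submodule.map_iSup]
  simp only [← LinearMap.range_comp, comp_single]

theorem mem_span_singleton_iff_eq_or_eq_neg {E : Type*} [SeminormedAddCommGroup E]
    [NormedSpace ℝ E] {v w : E} (hv : ‖v‖ = 1) (hw : ‖w‖ = 1) :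
    w ∈ ℝ ∙ v ↔ v = w ∨ v = -w := by
  rw [Submodule.mem_span_singleton]
  constructor
  · rintro ⟨c, rfl⟩
    have abs_c : |c| = 1 := by simpa [norm_smul, hv] using hw
    rcases eq_or_eq_neg_of_abs_eq abs_c with rfl | rfl <;> simp
  · rintro (rfl | rfl)
    · exact ⟨1, one_smul ℝ v⟩
    · exact ⟨-1, by simp⟩

theorem ne_bot_iff_exists_norm_eq_one {𝕜 E : Type*} [RCLike 𝕜] [NormedAddCommGroup E]
    [NormedSpace 𝕜 E] {K : Submodule 𝕜 E} : K ≠ ⊥ ↔ ∃ w, ‖w‖ = 1 ∧ w ∈ K := by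
  rw [Submodule.ne_bot_iff]
  constructor
  · rintro ⟨x, hx, hx0⟩
    exact ⟨_, norm_smul_inv_norm (𝕜 := 𝕜) hx0, K.smul_mem _ hx⟩
  · rintro ⟨w, hw, hwK⟩
    exact ⟨w, hwK, ne_zero_of_norm_ne_zero (hw ▸ one_ne_zero)⟩

end LinearAlgebra

section ConstSMul

variable {𝕜 E H M F : Type*} [NontriviallyNormedField 𝕜] [NormedAddCommGroup E] [NormedSpace 𝕜 E]
  [TopologicalSpace H] {I : ModelWithCorners 𝕜 E H} [TopologicalSpace M] [ChartedSpace H M]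
  [NormedAddCommGroup F] [NormedSpace 𝕜 F]

theorem range_mvfderiv_const_smul {f : M → F} {x : M} (hf : MDifferentiableAt I 𝓘(𝕜, F) f x)
    (c : 𝕜) :
    (mvfderiv I (c • f) x).range = ⨆ _ : c ≠ 0, (mvfderiv I f x).range := by
  rw [← LinearMap.range_smul', mvfderiv, const_smul_mfderiv hf]
  rfl

end ConstSMul

section PiManifold

variable {𝕜 ι F : Type*} [NontriviallyNormedField 𝕜] [Fintype ι]
  {E : ι → Type*} [∀ i, NormedAddCommGroup (E i)] [∀ i, NormedSpace 𝕜 (E i)]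
  {H : ι → Type*} [∀ i, TopologicalSpace (H i)] {I : ∀ i, ModelWithCorners 𝕜 (E i) (H i)}
  {M : ι → Type*} [∀ i, TopologicalSpace (M i)] [∀ i, ChartedSpace (H i) (M i)]
  [NormedAddCommGroup F] [NormedSpace 𝕜 F]

theorem hasMFDerivAt_pi_apply (x : ∀ i, M i) (i : ι) :
    HasMFDerivAt (ModelWithCorners.pi I) (I i) (fun y : ∀ i, M i ↦ y i) x
      (ContinuousLinearMap.proj (R := 𝕜) (φ := fun i ↦ TangentSpace (I i) (x i)) i) := by
  -- In the extended charts at `x`, evaluation at `i` is the linear projection to `E i`.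
  have right_inv {y : ∀ i, E i} (hy : y ∈ (extChartAt (ModelWithCorners.pi I) x).target) :=
    congrFun ((extChartAt (ModelWithCorners.pi I) x).right_inv hy) i
  refine ⟨(continuous_apply i).continuousAt,
    (ContinuousLinearMap.proj (R := 𝕜) (φ := E) i).hasFDerivWithinAt.congr_of_eventuallyEq ?_
      (right_inv (mem_extChartAt_target x))⟩
  filter_upwards [extChartAt_target_mem_nhdsWithin (I := ModelWithCorners.pi I) x] with y hy
  exact right_inv hy

theorem hasMFDerivAt_sum_pi_apply {f : ∀ i, M i → F} {x : ∀ i, M i}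
    {f' : ∀ i, TangentSpace (I i) (x i) →L[𝕜] F}
    (hf : ∀ i, HasMFDerivAt (I i) 𝓘(𝕜, F) (f i) (x i) (f' i)) :
    HasMFDerivAt (ModelWithCorners.pi I) 𝓘(𝕜, F) (fun y ↦ ∑ i, f i (y i)) x
      (∑ i, f' i ∘L ContinuousLinearMap.proj i) := by
  have comp_apply (i : ι) := (hf i).comp x (hasMFDerivAt_pi_apply x i)
  exact ⟨tendsto_finsetSum _ fun i _ ↦ (comp_apply i).1,
    HasFDerivWithinAt.fun_sum fun i _ ↦ (comp_apply i).2⟩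

theorem range_mvfderiv_sum_pi_apply {f : ∀ i, M i → F} {x : ∀ i, M i}
    (hf : ∀ i, MDifferentiableAt (I i) 𝓘(𝕜, F) (f i) (x i)) :
    (mvfderiv (ModelWithCorners.pi I) (fun y ↦ ∑ i, f i (y i)) x).range =
      ⨆ i, (mvfderiv (I i) (f i) (x i)).range := by
  have hasMFDerivAt_sum := hasMFDerivAt_sum_pi_apply
    (f' := fun i ↦ mvfderiv (I i) (f i) (x i)) fun i ↦ (hf i).hasMFDerivAt
  rw [mvfderiv, hasMFDerivAt_sum.mfderiv]
  exact range_sum_comp_proj _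

end PiManifold

section WorkMap

variable {ι E : Type*} [Fintype ι] [NormedAddCommGroup E] [InnerProductSpace ℝ E]

/-- The work map of the open chain with link lengths `ℓ`: the position of its endpoint as a function
of the directions `u` of its links. The lengths are arbitrary reals, and the links are indexed by
any finite type since only their sum matters. -/
def workMap (ℓ : ι → ℝ) (u : ι → sphere (0 : E) 1) : E :=
  ∑ i, ℓ i • (u i : E)

variable {n : ℕ} [Fact (Module.finrank ℝ E = n + 1)] (ℓ : ι → ℝ) (u : ι → sphere (0 : E) 1)

theorem range_mvfderiv_workMap :
    (mvfderiv (ModelWithCorners.pi fun _ : ι ↦ 𝓡 n) (workMap ℓ) u).range =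
      ⨆ i, ⨆ _ : ℓ i ≠ 0, (ℝ ∙ (u i : E))ᗮ := by
  have mdifferentiableAt_coe (v : sphere (0 : E) 1) :
      MDifferentiableAt (𝓡 n) 𝓘(ℝ, E) ((↑) : sphere (0 : E) 1 → E) v :=
    (contMDiff_coe_sphere v).mdifferentiableAt one_ne_zero
  have range_link (i : ι) :
      (mvfderiv (𝓡 n) (ℓ i • ((↑) : sphere (0 : E) 1 → E)) (u i)).range =
        ⨆ _ : ℓ i ≠ 0, (ℝ ∙ (u i : E))ᗮ := by
    rw [range_mvfderiv_const_smul (mdifferentiableAt_coe (u i)), range_mvfderiv_subtypeVal]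
  have range_sum := range_mvfderiv_sum_pi_apply (x := u)
    fun i ↦ (mdifferentiableAt_coe (u i)).const_smul (ℓ i)
  exact range_sum.trans (iSup_congr range_link)

theorem orthogonal_range_mvfderiv_workMap :
    (mvfderiv (ModelWithCorners.pi fun _ : ι ↦ 𝓡 n) (workMap ℓ) u).rangeᗮ =
      ⨅ i, ⨅ _ : ℓ i ≠ 0, ℝ ∙ (u i : E) := by
  rw [range_mvfderiv_workMap, iSup_subtype', ← Submodule.iInf_orthogonal, iInf_subtype']
  simp only [Submodule.orthogonal_orthogonal]

theorem stmt_1_general :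
    Function.Surjective
        (mfderiv (ModelWithCorners.pi fun _ : ι ↦ 𝓡 n) 𝓘(ℝ, E) (workMap ℓ) u) ↔
      ¬ ∃ w : E, ‖w‖ = 1 ∧ ∀ i, ℓ i ≠ 0 → (u i : E) = w ∨ (u i : E) = -w := by
  have : FiniteDimensional ℝ E := .of_fact_finrank_eq_succ n
  change Function.Surjective
    (mvfderiv (ModelWithCorners.pi fun _ : ι ↦ 𝓡 n) (workMap ℓ) u).toLinearMap ↔ _
  rw [← LinearMap.range_eq_top, ← Submodule.orthogonal_eq_bot_iff,
    orthogonal_range_mvfderiv_workMap, ← not_ne_iff, ne_bot_iff_exists_norm_eq_one]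
  simp only [Submodule.mem_iInf]
  exact not_congr <| exists_congr fun w ↦ and_congr_right fun hw ↦ forall₂_congr fun i _ ↦
    mem_span_singleton_iff_eq_or_eq_neg (norm_eq_of_mem_sphere (u i)) hw

end WorkMap

theorem stmt_1 (d k : ℕ) (hd : 2 ≤ d) (hk : 1 ≤ k)
    [Fact (Module.finrank ℝ (EuclideanSpace ℝ (Fin d)) = (d - 1) + 1)]
    (ℓ : Fin k → ℝ) (hℓ : ∀ i, 0 < ℓ i)
    (u : Fin k → (sphere (0 : EuclideanSpace ℝ (Fin d)) 1))
    (hu : ¬ ∃ w : EuclideanSpace ℝ (Fin d), ‖w‖ = 1 ∧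
      ∀ i, (u i : EuclideanSpace ℝ (Fin d)) = w ∨ (u i : EuclideanSpace ℝ (Fin d)) = -w) :
    Function.Surjective
      (mfderiv (ModelWithCorners.pi (fun _ : Fin k => (𝓡 (d - 1))))
        (𝓘(ℝ, EuclideanSpace ℝ (Fin d)))
        (fun v : Fin k → (sphere (0 : EuclideanSpace ℝ (Fin d)) 1) =>
          ∑ i, ℓ i • (v i : EuclideanSpace ℝ (Fin d))) u) :=
  (stmt_1_general ℓ u).2 fun ⟨w, hw, aligned⟩ ↦ hu ⟨w, hw, fun i ↦ aligned i (hℓ i).ne'⟩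
end

section
/- Let Γ be a linkage in ℝ^d with base vertex x*, and suppose (x*, v₁) ∈ E is an edge of length ℓ₁ > 0. Define p : C*(Γ) → S^{d-1} by p(q) = (ℓ₁)⁻¹ • (q v₁), where S^{d-1} is the unit sphere in EuclideanSpace ℝ (Fin d). Then p is a locally trivial fibration: for every θ₀ ∈ S^{d-1} there exist an open neighborhood U of θ₀ in S^{d-1} and a homeomorphism h from p⁻¹(U) onto U × p⁻¹({θ₀}) such that the first coordinate of h(q) equals p(q) for every q ∈ p⁻¹(U). -/
/-!
For `θ` on the unit sphere with `θ ≠ -θ₀`, the reflection in the line spanned by `θ + θ₀` exchanges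
`θ` and `θ₀` and depends continuously on `θ`. Applied to every vertex, it maps pointed
configurations to pointed configurations and exchanges the fibres over `θ` and `θ₀`. This
trivializes the direction map over the complement of the antipode `-θ₀`.
-/

/-- The local trivialization over `U` of a map `p`, built from a continuous family of permutations
`T b` of the total space, for `b ∈ U`, that carry the fibre over `b₀` onto the fibre over `b`. -/
def preimageHomeomorphProdFiber {X B : Type*} [TopologicalSpace X] [TopologicalSpace B]
    {p : X → B} (hp : Continuous p) {U : Set B} {b₀ : B}
    (T : U → Equiv.Perm X) (hT : Continuous fun z : U × X ↦ T z.1 z.2)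
    (hTsymm : Continuous fun z : U × X ↦ (T z.1).symm z.2)
    (hfiber : ∀ b x, p (T b x) = b ↔ p x = b₀) :
    p ⁻¹' U ≃ₜ U × (p ⁻¹' {b₀}) where
  toFun x := (⟨p x, x.2⟩, ⟨(T ⟨p x, x.2⟩).symm x,
    (hfiber ⟨p x, x.2⟩ _).1 (congrArg p (Equiv.apply_symm_apply _ _))⟩)
  invFun z := ⟨T z.1 z.2, Set.mem_preimage.2 <| (hfiber z.1 z.2).2 z.2.2 ▸ z.1.2⟩
  left_inv x := by simp
  right_inv z := by
    have hbase : p (T z.1 z.2) = z.1 := (hfiber z.1 z.2).2 z.2.2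
    ext <;> simp [hbase]
  continuous_toFun := by
    have hbase : Continuous fun x : p ⁻¹' U ↦ (⟨p x, x.2⟩ : U) := by fun_prop
    exact hbase.prodMk ((hTsymm.comp (hbase.prodMk continuous_subtype_val)).subtype_mk _)
  continuous_invFun :=
    (hT.comp (continuous_fst.prodMk (continuous_subtype_val.comp continuous_snd))).subtype_mk _

theorem continuous_reflection_span_singleton {𝕜 F X : Type*} [RCLike 𝕜] [NormedAddCommGroup F]
    [InnerProductSpace 𝕜 F] [TopologicalSpace X] {f g : X → F} (hf : Continuous f)
    (hg : Continuous g) (hf₀ : ∀ x, f x ≠ 0) :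
    Continuous fun x ↦ (𝕜 ∙ f x).reflection (g x) := by
  simp only [Submodule.reflection_singleton_apply]
  have hnorm : ∀ x, (‖f x‖ : 𝕜) ^ 2 ≠ 0 := fun x ↦ by simpa using hf₀ x
  fun_prop (disch := assumption)

theorem reflection_span_add_apply_left {F : Type*} [NormedAddCommGroup F] [InnerProductSpace ℝ F]
    {v w : F} (h : ‖v‖ = ‖w‖) : (ℝ ∙ (v + w)).reflection v = w := by
  have hneg : (ℝ ∙ (v - -w))ᗮ.reflection v = -w := Submodule.reflection_sub (by rwa [norm_neg])
  rw [sub_neg_eq_add, Submodule.reflection_orthogonal_apply] at hneg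
  exact neg_injective hneg

/-- The pointed configuration space `C*(Γ)` in `F` of the linkage `Γ` with edges `E` and lengths
`ℓ`: the configurations realizing every edge length with the base vertex `x₀` at the origin. -/
def pointedConfigurationSpace (F : Type*) [NormedAddCommGroup F] {V : Type*} (E : Set (V × V))
    (ℓ : V × V → ℝ) (x₀ : V) : Set (V → F) :=
  {p | (∀ e ∈ E, ‖p e.1 - p e.2‖ = ℓ e) ∧ p x₀ = 0}

namespace pointedConfigurationSpace

variable {V F : Type*} [NormedAddCommGroup F] {E : Set (V × V)} {ℓ : V × V → ℝ} {x₀ : V}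

theorem continuous_eval (v : V) :
    Continuous fun q : pointedConfigurationSpace F E ℓ x₀ ↦ q.1 v :=
  (continuous_apply v).comp continuous_subtype_val

theorem comp_mem_iff [NormedSpace ℝ F] (R : F ≃ₗᵢ[ℝ] F) {p : V → F} :
    R ∘ p ∈ pointedConfigurationSpace F E ℓ x₀ ↔ p ∈ pointedConfigurationSpace F E ℓ x₀ := by
  simp [pointedConfigurationSpace, ← map_sub]

/-- The action of a linear isometry on pointed configurations, vertex by vertex. -/
def permOfIsometry [NormedSpace ℝ F] (R : F ≃ₗᵢ[ℝ] F) :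
    Equiv.Perm (pointedConfigurationSpace F E ℓ x₀) :=
  (Equiv.piCongrRight fun _ ↦ R.toEquiv).subtypeEquiv fun _ ↦ (comp_mem_iff R).symm

variable [InnerProductSpace ℝ F]

theorem continuous_permOfIsometry_reflection {B : Type*} [TopologicalSpace B] {u : B → F}
    (hu : Continuous u) (hu₀ : ∀ b, u b ≠ 0) :
    Continuous fun z : B × pointedConfigurationSpace F E ℓ x₀ ↦
      permOfIsometry (ℝ ∙ u z.1).reflection z.2 := by
  refine (continuous_pi fun v ↦ ?_).subtype_mk _
  exact continuous_reflection_span_singleton (hu.comp continuous_fst)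
    ((continuous_eval v).comp continuous_snd) fun z ↦ hu₀ z.1

theorem smul_permOfIsometry_reflection_eq_iff (c : ℝ) (v : V) {θ θ₀ : F} (h : ‖θ‖ = ‖θ₀‖)
    (q : pointedConfigurationSpace F E ℓ x₀) :
    c • (permOfIsometry (ℝ ∙ (θ + θ₀)).reflection q).1 v = θ ↔ c • q.1 v = θ₀ := by
  set R := (ℝ ∙ (θ + θ₀)).reflection
  have hR : R θ₀ = θ := by
    rw [← reflection_span_add_apply_left h]
    exact Submodule.reflection_reflection _ _
  calc
    c • R (q.1 v) = θ ↔ R (c • q.1 v) = R θ₀ := by rw [map_smul, hR]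
    _ ↔ c • q.1 v = θ₀ := R.injective.eq_iff

/-- The trivialization of the scaled position `q ↦ c • q v` of a vertex `v` over the unit sphere
punctured at `-θ₀`. For the far end `v` of an edge of length `c⁻¹` at the base vertex, this position
is the direction of the edge. -/
noncomputable def homeomorphProdFiber (c : ℝ) (v : V) {θ₀ : F} (hθ₀ : ‖θ₀‖ = 1) :
    (fun q : pointedConfigurationSpace F E ℓ x₀ ↦ c • q.1 v) ⁻¹' ({-θ₀}ᶜ ∩ {x | ‖x‖ = 1}) ≃ₜ
      ({-θ₀}ᶜ ∩ {x | ‖x‖ = 1} : Set F) ×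
        ((fun q : pointedConfigurationSpace F E ℓ x₀ ↦ c • q.1 v) ⁻¹' {θ₀}) :=
  have hcont := continuous_permOfIsometry_reflection
    (u := fun θ : ({-θ₀}ᶜ ∩ {x | ‖x‖ = 1} : Set F) ↦ (θ : F) + θ₀) (by fun_prop)
    fun θ ↦ mt eq_neg_of_add_eq_zero_left θ.2.1
  preimageHomeomorphProdFiber ((continuous_eval v).const_smul c)
    (fun θ ↦ permOfIsometry (ℝ ∙ ((θ : F) + θ₀)).reflection)
    -- A reflection is its own inverse, so `hcont` also gives continuity of the inverses.
    hcont hcont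
    fun θ ↦ smul_permOfIsometry_reflection_eq_iff c v (θ.2.2.trans hθ₀.symm)

end pointedConfigurationSpace

theorem stmt_5_general {V F : Type*} [NormedAddCommGroup F] [InnerProductSpace ℝ F]
    (E : Set (V × V)) (ℓ : V × V → ℝ) (x₀ v : V) (c : ℝ) {θ₀ : F} (hθ₀ : ‖θ₀‖ = 1) :
    ∃ U ⊆ {x : F | ‖x‖ = 1}, θ₀ ∈ U ∧ (∃ W, IsOpen W ∧ U = W ∩ {x | ‖x‖ = 1}) ∧
      ∃ h : (fun q : pointedConfigurationSpace F E ℓ x₀ ↦ c • q.1 v) ⁻¹' U ≃ₜ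
          U × ((fun q : pointedConfigurationSpace F E ℓ x₀ ↦ c • q.1 v) ⁻¹' {θ₀}),
        ∀ q, ((h q).1 : F) = c • q.1.1 v := by
  have hantipode : θ₀ ≠ -θ₀ := fun h ↦
    ne_neg_of_mem_unit_sphere ℝ ⟨θ₀, mem_sphere_zero_iff_norm.2 hθ₀⟩ (Subtype.ext h)
  exact ⟨{-θ₀}ᶜ ∩ {x | ‖x‖ = 1}, Set.inter_subset_right, ⟨hantipode, hθ₀⟩,
    ⟨{-θ₀}ᶜ, isOpen_compl_singleton, rfl⟩,
    pointedConfigurationSpace.homeomorphProdFiber c v hθ₀, fun _ ↦ rfl⟩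

theorem stmt_5 (d : ℕ) (hd : 2 ≤ d) (V : Type) [Fintype V]
    (E : Set (V × V)) (ℓ : V × V → ℝ) (hℓ : ∀ e ∈ E, 0 < ℓ e)
    (xs v₁ : V) (hedge : (xs, v₁) ∈ E)
    (ℓ₁ : ℝ) (hℓ₁ : ℓ₁ = ℓ (xs, v₁)) (hℓ₁pos : 0 < ℓ₁)
    (θ₀ : EuclideanSpace ℝ (Fin d)) (hθ₀ : ‖θ₀‖ = 1) :
    ∃ U : Set (EuclideanSpace ℝ (Fin d)),
      U ⊆ {x | ‖x‖ = 1} ∧ θ₀ ∈ U ∧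
      (∃ W : Set (EuclideanSpace ℝ (Fin d)), IsOpen W ∧ U = W ∩ {x | ‖x‖ = 1}) ∧
      ∃ h : {q : {p : V → EuclideanSpace ℝ (Fin d) //
                    (∀ e ∈ E, ‖p e.1 - p e.2‖ = ℓ e) ∧ p xs = 0} //
                ℓ₁⁻¹ • (q : V → EuclideanSpace ℝ (Fin d)) v₁ ∈ U} ≃ₜ
            (↥U ×
              {q : {p : V → EuclideanSpace ℝ (Fin d) //
                      (∀ e ∈ E, ‖p e.1 - p e.2‖ = ℓ e) ∧ p xs = 0} //
                  ℓ₁⁻¹ • (q : V → EuclideanSpace ℝ (Fin d)) v₁ = θ₀}),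
        ∀ q, ((h q).1 : EuclideanSpace ℝ (Fin d)) =
          ℓ₁⁻¹ • ((q : {p : V → EuclideanSpace ℝ (Fin d) //
              (∀ e ∈ E, ‖p e.1 - p e.2‖ = ℓ e) ∧ p xs = 0}) :
            V → EuclideanSpace ℝ (Fin d)) v₁ :=
  stmt_5_general E ℓ xs v₁ ℓ₁⁻¹ hθ₀
end

section
/- Let Γ be a linkage in ℝ^d with vertex set V, base vertex x₀ and a distinguished vertex x_k, and suppose Γ decomposes as Γ' together with an open k-chain: V = V' ∪ {y₁, …, y_{k−1}} with the yᵢ distinct vertices not in V', x₀, x_k ∈ V', E = E' ∪ {(y_{i−1}, y_i) : i = 1, …, k} where y₀ = x₀ and y_k = x_k, E' ⊆ V' × V', and the chain edges have lengths λ i > 0. Let Γ' = (V', E', ℓ restricted to E'). Then the map sending p ∈ C*(Γ) to the pair (p restricted to V', u) with u i = (λ i)⁻¹ • (p(y_i) − p(y_{i−1})) ∈ S^{d-1} is a homeomorphism from C*(Γ) (with base vertex x₀) onto the fiber product {(r, u) ∈ C*(Γ') × (S^{d-1})^k : r(x_k) = ∑ i, λ i • (u i)}. -/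
open scoped BigOperators

/-!
A walk starting at the origin is the same thing as its sequence of steps: differences one way,
partial sums the other, both continuous. Rescaling the steps by the edge lengths turns the length
constraints of a chain into unit vectors. Hence a configuration of `Γ` is a configuration of `Γ'`
together with unit vectors whose weighted sum leads from `x₀` to `x_k`, the interior vertices of
the chain being placed at the partial sums.
-/

section ChainDirections

variable {K M : Type*} {k : ℕ} [DivisionRing K] [AddCommGroup M] [Module K M]

/-- The steps of the walk `z`, rescaled by the inverses of the edge lengths `lam`. -/
def chainDirections (lam : Fin k → K) (z : Fin (k + 1) → M) : Fin k → M :=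
  fun i => (lam i)⁻¹ • (z i.succ - z i.castSucc)

/-- The walk from the origin whose `i`-th step is `lam i • u i`; it recovers the vertices of a
chain from its edge lengths and directions. -/
def chainVertices (lam : Fin k → K) (u : Fin k → M) : Fin (k + 1) → M :=
  Fin.partialSum fun i => lam i • u i

theorem chainVertices_zero (lam : Fin k → K) (u : Fin k → M) : chainVertices lam u 0 = 0 :=
  Fin.partialSum_zero _

theorem chainVertices_last (lam : Fin k → K) (u : Fin k → M) :
    chainVertices lam u (Fin.last k) = ∑ i, lam i • u i := by
  simp [chainVertices, Fin.partialSum, List.take_of_length_le, List.sum_ofFn]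

theorem chainVertices_chainDirections {lam : Fin k → K} (hlam : ∀ i, lam i ≠ 0)
    {z : Fin (k + 1) → M} (hz : z 0 = 0) : chainVertices lam (chainDirections lam z) = z := by
  simpa [chainVertices, chainDirections, hlam, hz, sub_eq_neg_add] using Fin.partialSum_left_neg z

theorem chainDirections_chainVertices {lam : Fin k → K} (hlam : ∀ i, lam i ≠ 0)
    (u : Fin k → M) : chainDirections lam (chainVertices lam u) = u := by
  funext i
  rw [chainDirections, chainVertices, Fin.partialSum_succ, add_sub_cancel_left,
    inv_smul_smul₀ (hlam i)]

theorem sum_smul_chainDirections {lam : Fin k → K} (hlam : ∀ i, lam i ≠ 0)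
    {z : Fin (k + 1) → M} (hz : z 0 = 0) :
    ∑ i, lam i • chainDirections lam z i = z (Fin.last k) := by
  rw [← chainVertices_last, chainVertices_chainDirections hlam hz]

variable [TopologicalSpace M] [ContinuousConstSMul K M]

theorem continuous_chainDirections [ContinuousSub M] (lam : Fin k → K) :
    Continuous (chainDirections lam : (Fin (k + 1) → M) → Fin k → M) := by
  unfold chainDirections
  fun_prop

theorem continuous_chainVertices [ContinuousAdd M] (lam : Fin k → K) :
    Continuous (chainVertices lam : (Fin k → M) → Fin (k + 1) → M) := by
  refine continuous_pi fun j => ?_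
  induction j using Fin.induction with
  | zero => simpa only [chainVertices_zero] using continuous_const
  | succ i ih =>
    simp only [chainVertices, Fin.partialSum_succ] at ih ⊢
    fun_prop

end ChainDirections

theorem norm_chainDirections_eq_one_iff {M : Type*} [SeminormedAddCommGroup M] [NormedSpace ℝ M]
    {k : ℕ} {lam : Fin k → ℝ} {i : Fin k} (hlam : 0 < lam i) (z : Fin (k + 1) → M) :
    ‖chainDirections lam z i‖ = 1 ↔ ‖z i.castSucc - z i.succ‖ = lam i := by
  rw [chainDirections, norm_smul, norm_inv, Real.norm_of_nonneg hlam.le, norm_sub_rev,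
    inv_mul_eq_one₀ hlam.ne', eq_comm]

/-- The vertices `y 0, …, y k` form an open chain attached to `V'`: the endpoints, which may
coincide, lie in `V'`, and the interior vertices enumerate the complement of `V'`. -/
structure IsOpenChain {V : Type*} {k : ℕ} (V' : Set V) (y : Fin (k + 1) → V) : Prop where
  zero_mem : y 0 ∈ V'
  last_mem : y (Fin.last k) ∈ V'
  interior_notMem : ∀ i, i ≠ 0 → i ≠ Fin.last k → y i ∉ V'
  interior_injective : ∀ i j, i ≠ 0 → i ≠ Fin.last k → j ≠ 0 → j ≠ Fin.last k → y i = y j → i = j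
  mem_or_mem_range : ∀ v, v ∈ V' ∨ v ∈ Set.range y

/-- The placement of the vertices given by `r` on `V'` and by `z` along the chain `y`; on `V'` the
values of `r` take precedence, and vertices in neither get `0`. -/
noncomputable def glueChain {V M : Type*} [Zero M] {k : ℕ} (V' : Set V) (y : Fin (k + 1) → V)
    (r : V' → M) (z : Fin (k + 1) → M) : V → M :=
  Function.extend Subtype.val r (Function.extend y z 0)

theorem glueChain_coe {V M : Type*} [Zero M] {k : ℕ} {V' : Set V} (y : Fin (k + 1) → V)
    (r : V' → M) (z : Fin (k + 1) → M) (v : V') : glueChain V' y r z v = r v :=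
  Subtype.val_injective.extend_apply r _ v

theorem continuous_glueChain {V M : Type*} [Zero M] [TopologicalSpace M] {k : ℕ} (V' : Set V)
    (y : Fin (k + 1) → V) :
    Continuous fun rz : (V' → M) × (Fin (k + 1) → M) => glueChain V' y rz.1 rz.2 := by
  classical
  refine continuous_pi fun v => ?_
  simp only [glueChain, Function.extend_def]
  split_ifs <;> fun_prop

namespace IsOpenChain

variable {V M : Type*} {k : ℕ} {V' : Set V} {y : Fin (k + 1) → V}

theorem apply_eq_apply_of_mem (hy : IsOpenChain V' y) {r : V' → M} {z : Fin (k + 1) → M}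
    (hz0 : z 0 = r ⟨y 0, hy.zero_mem⟩) (hzk : z (Fin.last k) = r ⟨y (Fin.last k), hy.last_mem⟩)
    {i : Fin (k + 1)} (hi : y i ∈ V') : z i = r ⟨y i, hi⟩ := by
  by_cases h0 : i = 0
  · subst h0; exact hz0
  by_cases hk : i = Fin.last k
  · subst hk; exact hzk
  exact absurd hi (hy.interior_notMem i h0 hk)

theorem eq_of_apply_eq_of_notMem (hy : IsOpenChain V' y) {i j : Fin (k + 1)} (hi : y i ∉ V')
    (hij : y i = y j) : i = j := by
  have interior {l : Fin (k + 1)} (hl : y l ∉ V') : l ≠ 0 ∧ l ≠ Fin.last k :=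
    ⟨fun h => hl (h ▸ hy.zero_mem), fun h => hl (h ▸ hy.last_mem)⟩
  obtain ⟨hi0, hik⟩ := interior hi
  obtain ⟨hj0, hjk⟩ := interior (hij ▸ hi)
  exact hy.interior_injective i j hi0 hik hj0 hjk hij

theorem glueChain_comp [Zero M] (hy : IsOpenChain V' y) {r : V' → M} {z : Fin (k + 1) → M}
    (hz0 : z 0 = r ⟨y 0, hy.zero_mem⟩)
    (hzk : z (Fin.last k) = r ⟨y (Fin.last k), hy.last_mem⟩) : glueChain V' y r z ∘ y = z := by
  have hfactors : z.FactorsThrough y := by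
    intro i j hij
    by_cases hi : y i ∈ V'
    · rw [hy.apply_eq_apply_of_mem hz0 hzk hi, hy.apply_eq_apply_of_mem hz0 hzk (hij ▸ hi)]
      simp only [hij]
    · rw [hy.eq_of_apply_eq_of_notMem hi hij]
  funext j
  by_cases hj : y j ∈ V'
  · exact (glueChain_coe y r z ⟨y j, hj⟩).trans (hy.apply_eq_apply_of_mem hz0 hzk hj).symm
  · rw [Function.comp_apply, glueChain, Function.extend_apply' _ _ _ (by simpa using hj),
      hfactors.extend_apply]

theorem glueChain_domRestrict_comp [Zero M] (hy : IsOpenChain V' y) (p : V → M) :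
    glueChain V' y (V'.domRestrict p) (p ∘ y) = p := by
  funext v
  by_cases hv : v ∈ V'
  · exact glueChain_coe y _ _ ⟨v, hv⟩
  · obtain ⟨j, rfl⟩ := (hy.mem_or_mem_range v).resolve_left hv
    exact congrFun (hy.glueChain_comp (r := V'.domRestrict p) (z := p ∘ y) rfl rfl) j

theorem chainDirections_glueChain_comp {K : Type*} [DivisionRing K] [AddCommGroup M] [Module K M]
    (hy : IsOpenChain V' y) {lam : Fin k → K} (hlam : ∀ i, lam i ≠ 0)
    {r : V' → M} {u : Fin k → M} (hr : r ⟨y 0, hy.zero_mem⟩ = 0)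
    (hclose : r ⟨y (Fin.last k), hy.last_mem⟩ = ∑ i, lam i • u i) :
    chainDirections lam (glueChain V' y r (chainVertices lam u) ∘ y) = u := by
  rw [hy.glueChain_comp ((chainVertices_zero lam u).trans hr.symm)
    ((chainVertices_last lam u).trans hclose.symm), chainDirections_chainVertices hlam]

end IsOpenChain

section Configurations

variable {V M : Type*} [SeminormedAddCommGroup M] [NormedSpace ℝ M] {k : ℕ} {V' : Set V}
  {y : Fin (k + 1) → V}

theorem forall_mem_union_chain_norm_sub_eq_iff (E' : Set (V × V)) {ℓ : V × V → ℝ} {lam : Fin k → ℝ}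
    (hlam : ∀ i, lam i = ℓ (y i.castSucc, y i.succ)) (hpos : ∀ i, 0 < lam i) (p : V → M) :
    (∀ e ∈ E' ∪ {e | ∃ i : Fin k, e = (y i.castSucc, y i.succ)}, ‖p e.1 - p e.2‖ = ℓ e) ↔
      (∀ e ∈ E', ‖p e.1 - p e.2‖ = ℓ e) ∧ ∀ i, ‖chainDirections lam (p ∘ y) i‖ = 1 := by
  simp only [norm_chainDirections_eq_one_iff (hpos _), hlam, Set.mem_union, Set.mem_ofPred_eq,
    or_imp, forall_and, forall_exists_index, Function.comp_apply]
  exact and_congr_right fun _ => forall_comm.trans (forall_congr' fun _ => forall_eq)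

theorem stmt_7_general (hy : IsOpenChain V' y) (E' : Set (V × V))
    (hE' : ∀ e ∈ E', e.1 ∈ V' ∧ e.2 ∈ V') (ℓ : V × V → ℝ) (lam : Fin k → ℝ)
    (hlam : ∀ i, lam i = ℓ (y i.castSucc, y i.succ)) (hpos : ∀ i, 0 < lam i) :
    ∃ h : {p : V → M // (∀ e ∈ E' ∪ {e | ∃ i : Fin k, e = (y i.castSucc, y i.succ)},
              ‖p e.1 - p e.2‖ = ℓ e) ∧ p (y 0) = 0} ≃ₜ
          {ru : {r : V' → M // (∀ (e : V × V) (he : e ∈ E'),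
                ‖r ⟨e.1, (hE' e he).1⟩ - r ⟨e.2, (hE' e he).2⟩‖ = ℓ e) ∧
                r ⟨y 0, hy.zero_mem⟩ = 0} × (Fin k → M) //
            (∀ i, ‖ru.2 i‖ = 1) ∧
              ru.1.val ⟨y (Fin.last k), hy.last_mem⟩ = ∑ i, lam i • ru.2 i},
      ∀ p, (h p).val.1.val = V'.domRestrict p.val ∧
        (h p).val.2 = chainDirections lam (p.val ∘ y) := by
  have hne i : lam i ≠ 0 := (hpos i).ne'
  have lengths_iff := forall_mem_union_chain_norm_sub_eq_iff (M := M) E' hlam hpos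
  refine ⟨{
    toFun := fun p => ⟨⟨⟨V'.domRestrict p.1, ((lengths_iff _).1 p.2.1).1, p.2.2⟩,
        chainDirections lam (p.1 ∘ y)⟩,
      ((lengths_iff _).1 p.2.1).2, (sum_smul_chainDirections hne (z := p.1 ∘ y) p.2.2).symm⟩
    invFun := fun q => ⟨glueChain V' y q.1.1.1 (chainVertices lam q.1.2),
      (lengths_iff _).2 ⟨fun e he => ?_, ?_⟩, ?_⟩
    left_inv := fun p => Subtype.ext ?_
    right_inv := fun q => Subtype.ext (Prod.ext (Subtype.ext ?_) ?_)
    continuous_toFun := ?_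
    continuous_invFun := ?_ }, fun _ => ⟨rfl, rfl⟩⟩
  · simpa only [← glueChain_coe y q.1.1.1 (chainVertices lam q.1.2)] using q.1.1.2.1 e he
  · simpa only [hy.chainDirections_glueChain_comp hne q.1.1.2.2 q.2.2] using q.2.1
  · exact (glueChain_coe y _ _ ⟨y 0, hy.zero_mem⟩).trans q.1.1.2.2
  · dsimp only
    rw [chainVertices_chainDirections hne p.2.2, hy.glueChain_domRestrict_comp]
  · exact funext (glueChain_coe y _ _)
  · exact hy.chainDirections_glueChain_comp hne q.1.1.2.2 q.2.2
  · exact .subtype_mk (.prodMk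
      (.subtype_mk ((Pi.continuous_domRestrict V').comp continuous_subtype_val) _)
      ((continuous_chainDirections lam).comp
        ((Pi.continuous_precomp y).comp continuous_subtype_val))) _
  · exact .subtype_mk ((continuous_glueChain V' y).comp
      (.prodMk (by fun_prop) ((continuous_chainVertices lam).comp (by fun_prop)))) _

end Configurations

theorem stmt_7 (d k : ℕ) (hd : 2 ≤ d) (hk : 1 ≤ k)
    (V : Type) [Fintype V] (V' : Set V) (x₀ xk : V)
    (hx₀ : x₀ ∈ V') (hxk : xk ∈ V')
    (y : Fin (k + 1) → V) (hy0 : y 0 = x₀) (hyk : y (Fin.last k) = xk)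
    (hyinj : ∀ i j : Fin (k + 1), i ≠ 0 → i ≠ Fin.last k →
      j ≠ 0 → j ≠ Fin.last k → y i = y j → i = j)
    (hynot : ∀ i : Fin (k + 1), i ≠ 0 → i ≠ Fin.last k → y i ∉ V')
    (hcover : ∀ v : V, v ∈ V' ∨ ∃ i : Fin (k + 1), i ≠ 0 ∧ i ≠ Fin.last k ∧ y i = v)
    (E' : Set (V × V)) (hE' : ∀ e ∈ E', e.1 ∈ V' ∧ e.2 ∈ V')
    (E : Set (V × V))
    (hE : E = E' ∪ {e | ∃ i : Fin k, e = (y i.castSucc, y i.succ)})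
    (ℓ : V × V → ℝ) (hℓ : ∀ e ∈ E, 0 < ℓ e)
    (lam : Fin k → ℝ) (hlam : ∀ i : Fin k, lam i = ℓ (y i.castSucc, y i.succ))
    (hlampos : ∀ i, 0 < lam i) :
    ∃ h : {p : V → EuclideanSpace ℝ (Fin d) //
             (∀ e ∈ E, ‖p e.1 - p e.2‖ = ℓ e) ∧ p x₀ = 0} ≃ₜ
          {ru : {r : V' → EuclideanSpace ℝ (Fin d) //
                   (∀ (e : V × V) (he : e ∈ E'),
                     ‖r ⟨e.1, (hE' e he).1⟩ - r ⟨e.2, (hE' e he).2⟩‖ = ℓ e) ∧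
                   r ⟨x₀, hx₀⟩ = 0} ×
                (Fin k → EuclideanSpace ℝ (Fin d)) //
            (∀ i, ‖ru.2 i‖ = 1) ∧
              (ru.1 : V' → EuclideanSpace ℝ (Fin d)) ⟨xk, hxk⟩ = ∑ i, lam i • ru.2 i},
      ∀ p, (((h p).val.1 : V' → EuclideanSpace ℝ (Fin d)) =
              fun v : V' => (p : V → EuclideanSpace ℝ (Fin d)) v) ∧
           ((h p).val.2 =
              fun i : Fin k => (lam i)⁻¹ •
                ((p : V → EuclideanSpace ℝ (Fin d)) (y i.succ) -
                 (p : V → EuclideanSpace ℝ (Fin d)) (y i.castSucc))) := by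
  subst hy0 hyk hE
  exact stmt_7_general ⟨hx₀, hxk, hynot, hyinj, fun v => (hcover v).imp_right
    fun ⟨i, _, _, hi⟩ => ⟨i, hi⟩⟩ E' hE' ℓ lam hlam hlampos
end

section
/- Let Γ be a linkage in ℝ^d (d ≥ 2) with base vertex x* and a distinguished vertex x_e ≠ x*, work map ψ : C*(Γ) → EuclideanSpace ℝ (Fin d) given by ψ(q) = q(x_e), reduced configuration space Ĉ(Γ) = {q ∈ C*(Γ) : q(x_e) = t • e₁ for some t > 0}, and reduced work map ψ̃(q) = ‖q(x_e)‖. Let V ∈ Ĉ(Γ) with ψ̃(V) = a₀ > 0, and assume there are N ≥ 1 and a smooth map g : ℝ^N → (EuclideanSpace ℝ (Fin d))^V with g(0) = V, g a homeomorphism onto an open neighborhood of V in Ĉ(Γ), whose Fréchet derivative is injective at every point, and such that 0 is a nondegenerate critical point of ψ̃ ∘ g (zero derivative, invertible Hessian). Then there exist n ≥ 1, lengths λ : Fin n → ℝ with λ i > 0, an aligned tuple u⁰ ∈ (S^{d-1})^n for the open n-chain with work map η satisfying η(u⁰) = a₀ • e₁, nonnegative integers s, s', open neighborhoods W of V in Ĉ(Γ)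 and W' of u⁰ in Ĉ' := {u ∈ (S^{d-1})^n : η(u) = t • e₁ for some t > 0}, homeomorphisms α : W → U × ℝ^s and β : W' → U' × ℝ^{s'} onto products with open factors U, U', with α(V) = (V̂, 0) and β(u⁰) = (û⁰, 0), and a homeomorphism f : U → U' with f(V̂) = û⁰, such that ψ̃ on W and the reduced work map u ↦ ‖η(u)‖ on W' factor through the projections to U and U' respectively, and the induced functions on U and U' correspond under f (i.e., for all w ∈ W, ψ̃(w) = ‖η(β⁻¹(f((α w).1), 0))‖). -/
open scoped BigOperators

/-- The first standard basis vector of `EuclideanSpace ℝ (Fin d)`. -/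
noncomputable def firstBasis (d : ℕ) [NeZero d] : EuclideanSpace ℝ (Fin d) :=
  EuclideanSpace.single 0 1

/-- The pointed configuration space of the linkage with vertices `V`, edges `E`,
lengths `ℓ` and base vertex `xs`. -/
def pointedConf (d : ℕ) (V : Type) (E : Set (V × V)) (ℓ : V × V → ℝ) (xs : V) :
    Set (V → EuclideanSpace ℝ (Fin d)) :=
  {q | (∀ e ∈ E, ‖q e.1 - q e.2‖ = ℓ e) ∧ q xs = 0}

/-- The reduced configuration space: pointed configurations whose end-effector `xe`
lies on the positive ray spanned by the first basis vector. -/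
noncomputable def reducedConf (d : ℕ) [NeZero d] (V : Type) (E : Set (V × V))
    (ℓ : V × V → ℝ) (xs xe : V) : Set (V → EuclideanSpace ℝ (Fin d)) :=
  {q | q ∈ pointedConf d V E ℓ xs ∧ ∃ t : ℝ, 0 < t ∧ q xe = t • firstBasis d}

/-- The reduced configuration space of an open `n`-chain with lengths `lam`:
tuples of unit direction vectors whose work-map value lies on the positive
ray spanned by the first basis vector. -/
noncomputable def chainReducedConf (d n : ℕ) [NeZero d] (lam : Fin n → ℝ) :
    Set (Fin n → EuclideanSpace ℝ (Fin d)) :=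
  {u | (∀ i, ‖u i‖ = 1) ∧ ∃ t : ℝ, 0 < t ∧ ∑ i, lam i • u i = t • firstBasis d}

/-!
Nondegeneracy makes `V` an isolated critical point of the length `ψ̃` of the end vector on `Ĉ(Γ)`.
The isometries of `ℝ^d` fixing `e₁` act on `Ĉ(Γ)` and preserve `ψ̃`, so for `d > 2` those near the
identity fix `V`: all its vertices lie on the line `ℝ e₁`. A tangent vector at `V` parallel to `e₁`
is constant along edges and can be integrated by sliding parts of `V` along `e₁`, again through
critical points, so it vanishes. Hence the tangent space embeds equivariantly into a sum of copies
of `P = e₁ᗮ`. Reflections in the coordinate hyperplanes and permutations of the coordinates of `P`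
identify it with `P^r` in such a way that the Hessian of `ψ̃` is `∑ i, ± ‖v i‖ ^ 2`. For `d = 2` the
space `P` is a line and this is Sylvester's law of inertia.

An aligned open chain with `r + 1` links whose end is at `a₀ • e₁` is parametrized near its aligned
configuration by the projections to `P` of its last `r` links. Its first link and its last ones can
be given lengths and signs for which the Hessian of the reduced work map has the signature found
above on each coordinate of `P`, and such quadratic forms on `P^r` differ by a linear isomorphism.
By the Morse lemma the two functions are then equal up to a local homeomorphism, so that
S-equivalence holds with no Euclidean factor on either side.
-/

section

open Topology Filter

set_option maxSynthPendingDepth 3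

section HadamardForm

variable {E G : Type*} [NormedAddCommGroup E] [NormedSpace ℝ E]
  [NormedAddCommGroup G] [NormedSpace ℝ G]

lemma integral_smul_comp_smul_sub_eq [CompleteSpace G] {w : ℝ → ℝ} (hw : Continuous w)
    {H : E → G} (hH : Continuous H) (A : E →L[ℝ] G) (x y : E) :
    (∫ t in (0 : ℝ)..1, w t • H (t • x)) - (∫ t in (0 : ℝ)..1, w t • H (t • y)) -
      ((∫ t in (0 : ℝ)..1, w t * t) • A) (x - y) =
      ∫ t in (0 : ℝ)..1, w t • (H (t • x) - H (t • y) - A (t • x - t • y)) := by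
  have hintegrable (z : E) :
      IntervalIntegrable (fun t : ℝ ↦ w t • H (t • z)) MeasureTheory.volume 0 1 :=
    Continuous.intervalIntegrable (by fun_prop) _ _
  have hsplit (t : ℝ) : w t • (H (t • x) - H (t • y) - A (t • x - t • y)) =
      w t • H (t • x) - w t • H (t • y) - (w t * t) • A (x - y) := by
    rw [← smul_sub t x y, map_smul, smul_sub, smul_sub, smul_smul]
  simp_rw [hsplit]
  rw [intervalIntegral.integral_sub ((hintegrable x).sub (hintegrable y))
      (Continuous.intervalIntegrable (by fun_prop) _ _),
    intervalIntegral.integral_sub (hintegrable x) (hintegrable y),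
    intervalIntegral.integral_smul_const, _root_.smul_apply]

lemma hasStrictFDerivAt_integral_smul_comp_smul [CompleteSpace G] {w : ℝ → ℝ}
    (hw : Continuous w) {H : E → G} (hH : Continuous H) {H' : E →L[ℝ] G}
    (hH' : HasStrictFDerivAt H H' 0) :
    HasStrictFDerivAt (fun x ↦ ∫ t in (0 : ℝ)..1, w t • H (t • x))
      ((∫ t in (0 : ℝ)..1, w t * t) • H') 0 := by
  obtain ⟨M, hM⟩ := (isCompact_Icc (a := (0 : ℝ)) (b := 1)).exists_bound_of_continuousOn
    hw.continuousOn
  have hM0 : 0 ≤ M := (norm_nonneg _).trans (hM 0 (by simp))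
  rw [hasStrictFDerivAt_iff_isLittleO, Asymptotics.isLittleO_iff] at *
  intro c hc
  obtain ⟨δ, hδ, hrem⟩ := Metric.eventually_nhds_iff.1 (hH' (c := c / (M + 1)) (by positivity))
  refine Metric.eventually_nhds_iff.2 ⟨δ, hδ, ?_⟩
  rintro ⟨x, y⟩ hxy
  simp only [Prod.dist_eq, dist_zero_right, sup_lt_iff] at hxy
  rw [integral_smul_comp_smul_sub_eq hw hH]
  have hbound : ∀ t ∈ Set.uIoc (0 : ℝ) 1,
      ‖w t • (H (t • x) - H (t • y) - H' (t • x - t • y))‖ ≤ c * ‖x - y‖ := by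
    intro t ht
    rw [Set.uIoc_of_le zero_le_one] at ht
    have hshrink (z : E) : ‖t • z‖ ≤ ‖z‖ := by
      rw [norm_smul, Real.norm_of_nonneg ht.1.le]
      exact mul_le_of_le_one_left (norm_nonneg _) ht.2
    have hrem_t := @hrem (t • x, t • y) (by
      simp only [Prod.dist_eq, dist_zero_right, sup_lt_iff]
      exact ⟨(hshrink x).trans_lt hxy.1, (hshrink y).trans_lt hxy.2⟩)
    calc ‖w t • (H (t • x) - H (t • y) - H' (t • x - t • y))‖
        ≤ (M + 1) * (c / (M + 1) * ‖t • x - t • y‖) := by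
          rw [norm_smul]
          gcongr
          exact (hM t ⟨ht.1.le, ht.2⟩).trans (by linarith)
      _ = c * ‖t • (x - y)‖ := by rw [smul_sub]; field_simp
      _ ≤ c * ‖x - y‖ := by gcongr; exact hshrink _
  simpa using intervalIntegral.norm_integral_le_of_norm_le_const hbound

/-- A family of symmetric bilinear forms `B x`, strictly differentiable in `x` at `0`, with
`F x = F 0 + B x (x, x) / 2` near `0`. Such a family exists when `0` is a critical point of a
`C³` function `F` (Hadamard's lemma), and then `B 0` is the Hessian of `F` at `0`. -/
structure IsHadamardForm (F : E → ℝ) (B : E → E →L[ℝ] E →L[ℝ] ℝ) : Prop where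
  symm : ∀ x y z, B x y z = B x z y
  exists_hasStrictFDerivAt : ∃ B' : E →L[ℝ] E →L[ℝ] E →L[ℝ] ℝ, HasStrictFDerivAt B B' 0
  eventually_eq : ∀ᶠ x in 𝓝 0, F x = F 0 + 1 / 2 * B x x x

theorem exists_isHadamardForm_of_contDiff {F : E → ℝ} (hF : ContDiff ℝ 3 F)
    (hF0 : fderiv ℝ F 0 = 0) :
    ∃ B, IsHadamardForm F B ∧ B 0 = fderiv ℝ (fderiv ℝ F) 0 := by
  set H := fderiv ℝ (fderiv ℝ F) with hH
  have hH1 : ContDiff ℝ 1 H := (hF.fderiv_right (m := 2) (by norm_num)).fderiv_right (by norm_num)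
  have hHc : Continuous H := hH1.continuous
  have hHsymm (x y z : E) : H x y z = H x z y :=
    (hF.contDiffAt.isSymmSndFDerivAt (by simp; norm_num)).eq y z
  have happly (x y z : E) : (∫ t in (0 : ℝ)..1, (2 * (1 - t)) • H (t • x)) y z =
      ∫ t in (0 : ℝ)..1, (2 * (1 - t)) • H (t • x) y z := by
    rw [ContinuousLinearMap.intervalIntegral_apply
        (Continuous.intervalIntegrable (by fun_prop) _ _),
      ContinuousLinearMap.intervalIntegral_apply (Continuous.intervalIntegrable (by fun_prop) _ _)]
    rfl
  refine ⟨fun x ↦ ∫ t in (0 : ℝ)..1, (2 * (1 - t)) • H (t • x), ⟨fun x y z ↦ ?_, ?_, ?_⟩, ?_⟩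
  · simp only [happly, hHsymm _ y z]
  · exact ⟨_, hasStrictFDerivAt_integral_smul_comp_smul (by fun_prop) hHc
      (hH1.contDiffAt.hasStrictFDerivAt (by norm_num))⟩
  · refine .of_forall fun x ↦ ?_
    have htaylor := map_add_eq_sum_add_integral_iteratedFDeriv (f := F) (x := 0) (y := x) (n := 1)
      fun t _ ↦ (hF.contDiffAt (x := 0 + t • x)).of_le (by norm_num)
    simp only [zero_add, Finset.sum_range_succ, Finset.sum_range_zero, iteratedFDeriv_zero_apply,
      iteratedFDeriv_one_apply, hF0] at htaylor
    rw [htaylor, happly]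
    simp [mul_assoc, hH, iteratedFDeriv_two_apply]
  · simp only [smul_zero]
    have hmass : ∫ t in (0 : ℝ)..1, 2 * (1 - t) = 1 := by
      rw [intervalIntegral.integral_const_mul, intervalIntegral.integral_sub (by simp) (by simp)]
      norm_num
    rw [intervalIntegral.integral_smul_const, hmass, one_smul]

namespace IsHadamardForm

lemma const_mul {F : E → ℝ} {B : E → E →L[ℝ] E →L[ℝ] ℝ} (h : IsHadamardForm F B) (c : ℝ) :
    IsHadamardForm (fun x ↦ c * F x) (fun x ↦ c • B x) where
  symm x y z := by simp [h.symm x y z]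
  exists_hasStrictFDerivAt := h.exists_hasStrictFDerivAt.elim fun B' hB ↦
    ⟨c • B', HasStrictFDerivAt.const_smul hB c⟩
  eventually_eq := h.eventually_eq.mono fun x hx ↦ by simp [hx]; ring

lemma sum {ι : Type*} [Fintype ι] {F : ι → E → ℝ} {B : ι → E → E →L[ℝ] E →L[ℝ] ℝ}
    (h : ∀ i, IsHadamardForm (F i) (B i)) :
    IsHadamardForm (fun x ↦ ∑ i, F i x) (fun x ↦ ∑ i, B i x) where
  symm x y z := by simp [(h _).symm x y z]
  exists_hasStrictFDerivAt := by
    choose B' hB' using fun i ↦ (h i).exists_hasStrictFDerivAt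
    exact ⟨∑ i, B' i, .fun_sum fun i _ ↦ hB' i⟩
  eventually_eq := by
    filter_upwards [eventually_all.2 fun i ↦ (h i).eventually_eq] with x hx
    simp [hx, Finset.sum_add_distrib, Finset.mul_sum]

lemma apply_fderiv_eq_of_comp_eq {F : E → ℝ} {B : E → E →L[ℝ] E →L[ℝ] ℝ}
    (hB : IsHadamardForm F B) {h : E → E} (h0 : h 0 = 0) (hh : DifferentiableAt ℝ h 0)
    (hFh : ∀ᶠ x in 𝓝 0, F (h x) = F x) (v : E) :
    B 0 (fderiv ℝ h 0 v) (fderiv ℝ h 0 v) = B 0 v v := by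
  have hBc : ContinuousAt B 0 := hB.exists_hasStrictFDerivAt.elim fun _ hB' ↦ hB'.continuousAt
  suffices hlim : ∀ k : E → E, k 0 = 0 → DifferentiableAt ℝ k 0 →
      Tendsto (fun t : ℝ ↦ (t ^ 2)⁻¹ * (2 * (F (k (t • v)) - F 0))) (𝓝[≠] 0)
        (𝓝 (B 0 (fderiv ℝ k 0 v) (fderiv ℝ k 0 v))) by
    have hid := hlim id rfl differentiableAt_id
    rw [fderiv_id, ContinuousLinearMap.id_apply] at hid
    refine tendsto_nhds_unique_of_eventuallyEq (hlim h h0 hh) hid ?_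
    have hline : Tendsto (fun t : ℝ ↦ t • v) (𝓝[≠] 0) (𝓝 0) := by
      have hcont : Continuous fun t : ℝ ↦ t • v := by fun_prop
      simpa using (hcont.tendsto 0).mono_left nhdsWithin_le_nhds
    filter_upwards [hline.eventually hFh] with t ht
    rw [ht, id]
  intro k hk0 hk
  have hderiv : HasDerivAt (fun t : ℝ ↦ k (t • v)) (fderiv ℝ k 0 v) 0 := by
    have hline : HasDerivAt (fun t : ℝ ↦ t • v) v 0 := by
      simpa using (hasDerivAt_id (0 : ℝ)).smul_const v
    have hk' : HasFDerivAt k (fderiv ℝ k 0) ((0 : ℝ) • v) := by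
      simpa using hk.hasFDerivAt
    exact hk'.comp_hasDerivAt 0 hline
  have hcurve : Tendsto (fun t : ℝ ↦ k (t • v)) (𝓝[≠] 0) (𝓝 0) := by
    simpa [hk0] using hderiv.continuousAt.tendsto.mono_left nhdsWithin_le_nhds
  have hslope := hasDerivAt_iff_tendsto_slope.1 hderiv
  have hdiag : Continuous fun p : (E →L[ℝ] E →L[ℝ] ℝ) × E ↦ p.1 p.2 p.2 := by fun_prop
  refine ((hdiag.tendsto _).comp ((hBc.tendsto.comp hcurve).prodMk_nhds hslope)).congr' ?_
  filter_upwards [hcurve.eventually hB.eventually_eq] with t hF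
  simp only [hF, slope, Function.comp_apply, vsub_eq_sub, sub_zero, zero_smul, hk0, map_smul,
    _root_.smul_apply, smul_eq_mul]
  ring

end IsHadamardForm

end HadamardForm

section Morse

variable {E : Type*} [NormedAddCommGroup E] [NormedSpace ℝ E]

lemma exists_hasStrictFDerivAt_local_sqrt (A : Type*) [NormedRing A] [NormedAlgebra ℝ A]
    [CompleteSpace A] :
    ∃ (r : A → A) (r' : A →L[ℝ] A), HasStrictFDerivAt r r' 1 ∧ r 1 = 1 ∧
      (∀ᶠ C in 𝓝 1, r C * r C = C) ∧ ∀ᶠ R in 𝓝 1, r (R * R) = R := by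
  let two : A ≃L[ℝ] A := ContinuousLinearEquiv.smulLeft (Units.mk0 (2 : ℝ) two_ne_zero)
  have hsq : HasStrictFDerivAt (fun R : A ↦ R * R) (two : A →L[ℝ] A) 1 := by
    refine ((hasStrictFDerivAt_id 1).mul' (hasStrictFDerivAt_id 1)).congr_fderiv ?_
    ext R
    simp [two, two_smul]
  have hinv := hsq.to_localInverse
  have himage := hsq.localInverse_apply_image
  have hright := hsq.eventually_right_inverse
  simp only [mul_one] at hinv himage hright
  exact ⟨_, _, hinv, himage, hright, hsq.eventually_left_inverse⟩

/-- The adjoint of an operator with respect to a nondegenerate bilinear form `b`. -/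
noncomputable def formAdjoint (b : E ≃L[ℝ] (E →L[ℝ] ℝ)) (R : E →L[ℝ] E) : E →L[ℝ] E :=
  (b.symm : (E →L[ℝ] ℝ) →L[ℝ] E) ∘L (ContinuousLinearMap.compL ℝ E E ℝ).flip R ∘L
    (b : E →L[ℝ] (E →L[ℝ] ℝ))

lemma apply_formAdjoint (b : E ≃L[ℝ] (E →L[ℝ] ℝ)) (R : E →L[ℝ] E) (y z : E) :
    b (formAdjoint b R y) z = b y (R z) := by
  simp [formAdjoint]

lemma eq_formAdjoint {b : E ≃L[ℝ] (E →L[ℝ] ℝ)} {R S : E →L[ℝ] E}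
    (h : ∀ y z, b (S y) z = b y (R z)) : S = formAdjoint b R := by
  ext y
  apply b.injective
  ext z
  rw [h, apply_formAdjoint]

lemma continuous_formAdjoint (b : E ≃L[ℝ] (E →L[ℝ] ℝ)) : Continuous (formAdjoint b) := by
  have hflip : Continuous (ContinuousLinearMap.compL ℝ E E ℝ).flip :=
    ContinuousLinearMap.continuous _
  unfold formAdjoint
  fun_prop

lemma eventually_apply_local_sqrt_local_sqrt {b : E ≃L[ℝ] (E →L[ℝ] ℝ)}
    {r : (E →L[ℝ] E) → (E →L[ℝ] E)} (hr1 : r 1 = 1) (hrc : ContinuousAt r 1)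
    (hrr : ∀ᶠ C in 𝓝 1, r C * r C = C) (hri : ∀ᶠ R in 𝓝 1, r (R * R) = R) :
    ∀ᶠ C in 𝓝 1, (∀ y z, b (C y) z = b y (C z)) → ∀ y z, b (r C y) (r C z) = b (C y) z := by
  have hadj : Tendsto (fun C ↦ formAdjoint b (r C)) (𝓝 1) (𝓝 1) := by
    have hone : formAdjoint b (r 1) = 1 := (eq_formAdjoint (by simp [hr1])).symm
    simpa only [Function.comp_def, hone] using
      ((continuous_formAdjoint b).continuousAt.comp hrc).tendsto
  filter_upwards [hrr, hadj.eventually hri] with C hC hCadj hsymm y z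
  have hsq : formAdjoint b (r C) * formAdjoint b (r C) = C := by
    refine Eq.trans (eq_formAdjoint fun y z ↦ ?_) (eq_formAdjoint hsymm).symm
    rw [_root_.mul_apply_eq_comp, apply_formAdjoint, apply_formAdjoint,
      ← _root_.mul_apply_eq_comp, hC]
  rw [← apply_formAdjoint, ← hCadj, hsq, ← _root_.mul_apply_eq_comp, hC]

variable [CompleteSpace E]

/-- The **Morse lemma**. -/
theorem IsHadamardForm.exists_openPartialHomeomorph {F : E → ℝ} {B : E → E →L[ℝ] E →L[ℝ] ℝ}
    (h : IsHadamardForm F B) (hB : Function.Bijective (B 0)) :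
    ∃ φ : OpenPartialHomeomorph E E, 0 ∈ φ.source ∧ φ 0 = 0 ∧
      ∀ x ∈ φ.source, F x = F 0 + 1 / 2 * B 0 (φ x) (φ x) := by
  obtain ⟨B', hB'⟩ := h.exists_hasStrictFDerivAt
  obtain ⟨r, r', hr, hr1, hrr, hri⟩ := exists_hasStrictFDerivAt_local_sqrt (E →L[ℝ] E)
  let b : E ≃L[ℝ] (E →L[ℝ] ℝ) := ContinuousLinearEquiv.ofBijective (B 0)
    (LinearMap.ker_eq_bot.2 hB.1) (LinearMap.range_eq_top.2 hB.2)
  have hb (y z : E) : b y z = B 0 y z := rfl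
  let C : E → E →L[ℝ] E := fun x ↦ (b.symm : (E →L[ℝ] ℝ) →L[ℝ] E) ∘L B x
  have hbC (x y : E) : b (C x y) = B x y := b.apply_symm_apply _
  have hC0 : C 0 = 1 := by
    ext y
    exact b.symm_apply_apply y
  have hC : HasStrictFDerivAt C _ 0 := (hasStrictFDerivAt_const _ _).clm_comp hB'
  have hrC : HasStrictFDerivAt (fun x ↦ r (C x)) _ 0 := (hC0 ▸ hr).comp 0 hC
  have hCtendsto : Tendsto C (𝓝 0) (𝓝 1) := hC0 ▸ hC.continuousAt.tendsto
  have hφ : HasStrictFDerivAt (fun x ↦ r (C x) x)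
      ((ContinuousLinearEquiv.refl ℝ E : E ≃L[ℝ] E) : E →L[ℝ] E) 0 := by
    refine (hrC.clm_apply (hasStrictFDerivAt_id 0)).congr_fderiv ?_
    ext v
    simp [hC0, hr1]
  have hform : ∀ᶠ x in 𝓝 0, F x = F 0 + 1 / 2 * B 0 (r (C x) x) (r (C x) x) := by
    filter_upwards [h.eventually_eq, hCtendsto.eventually
      (eventually_apply_local_sqrt_local_sqrt (b := b) hr1 hr.continuousAt hrr hri)]
      with x hFx hsqrt
    have hsymm (y z : E) : b (C x y) z = b y (C x z) := by
      rw [hb y, h.symm, ← hb, hbC, hbC, h.symm]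
    rw [hFx, ← hb (r (C x) x), hsqrt hsymm, hbC]
  obtain ⟨S, hS, hSopen, h0S⟩ := eventually_nhds_iff.1 hform
  refine ⟨(hφ.toOpenPartialHomeomorph _).restrOpen S hSopen, ?_, by simp, fun x hx ↦ ?_⟩
  · simp [h0S, hφ.mem_toOpenPartialHomeomorph_source]
  · rw [OpenPartialHomeomorph.restrOpen_source] at hx
    simpa using hS x hx.2

variable {E₁ E₂ : Type*} [NormedAddCommGroup E₁] [NormedSpace ℝ E₁]
  [NormedAddCommGroup E₂] [NormedSpace ℝ E₂]

lemma bijective_of_apply_self_eq {b₁ : E₁ →L[ℝ] E₁ →L[ℝ] ℝ} {b₂ : E₂ →L[ℝ] E₂ →L[ℝ] ℝ}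
    (h₁ : ∀ x y, b₁ x y = b₁ y x) (h₂ : ∀ x y, b₂ x y = b₂ y x) (J : E₁ ≃L[ℝ] E₂)
    (hJ : ∀ x, b₁ x x = b₂ (J x) (J x)) (hb : Function.Bijective b₁) :
    Function.Bijective b₂ := by
  have hpolar (x y : E₁) : b₁ x y = b₂ (J x) (J y) := by
    have hxy := hJ (x + y)
    simp only [map_add, _root_.add_apply] at hxy
    linarith [h₁ x y, h₂ (J x) (J y), hJ x, hJ y]
  have hcomp : (b₂ : E₂ → E₂ →L[ℝ] ℝ) =
      J.arrowCongr (ContinuousLinearEquiv.refl ℝ ℝ) ∘ b₁ ∘ J.symm := by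
    ext x y
    simp [hpolar]
  rw [hcomp]
  exact (EquivLike.bijective _).comp (hb.comp J.symm.bijective)

theorem IsHadamardForm.exists_openPartialHomeomorph_comp_eq [CompleteSpace E₁] [CompleteSpace E₂]
    {F₁ : E₁ → ℝ} {F₂ : E₂ → ℝ}
    {B₁ : E₁ → E₁ →L[ℝ] E₁ →L[ℝ] ℝ} {B₂ : E₂ → E₂ →L[ℝ] E₂ →L[ℝ] ℝ}
    (h₁ : IsHadamardForm F₁ B₁) (h₂ : IsHadamardForm F₂ B₂) (h0 : F₁ 0 = F₂ 0)
    (hB₁ : Function.Bijective (B₁ 0)) (J : E₁ ≃L[ℝ] E₂)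
    (hJ : ∀ x, B₁ 0 x x = B₂ 0 (J x) (J x)) :
    ∃ Ψ : OpenPartialHomeomorph E₁ E₂, 0 ∈ Ψ.source ∧ Ψ 0 = 0 ∧
      ∀ x ∈ Ψ.source, F₂ (Ψ x) = F₁ x := by
  obtain ⟨φ₁, hφ₁0, hφ₁, hφ₁F⟩ := h₁.exists_openPartialHomeomorph hB₁
  obtain ⟨φ₂, hφ₂0, hφ₂, hφ₂F⟩ := h₂.exists_openPartialHomeomorph
    (bijective_of_apply_self_eq (h₁.symm 0) (h₂.symm 0) J hJ hB₁)
  have hφ₂symm : φ₂.symm 0 = 0 := by simpa only [hφ₂] using φ₂.left_inv hφ₂0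
  have hφ₂target : 0 ∈ φ₂.target := by simpa only [hφ₂] using φ₂.map_source hφ₂0
  refine ⟨(φ₁.trans J.toHomeomorph.toOpenPartialHomeomorph).trans φ₂.symm, ?_, ?_,
    fun x hx ↦ ?_⟩
  · simp [hφ₁0, hφ₁, hφ₂target]
  · simp [hφ₁, hφ₂symm]
  · simp only [OpenPartialHomeomorph.trans_source, Homeomorph.toOpenPartialHomeomorph_source,
      OpenPartialHomeomorph.symm_source, Set.preimage_univ, Set.inter_univ, Set.mem_inter_iff,
      Set.mem_preimage, OpenPartialHomeomorph.coe_trans, Function.comp_apply,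
      Homeomorph.toOpenPartialHomeomorph_apply] at hx
    have hx₂ := φ₂.map_target hx.2
    simp only [OpenPartialHomeomorph.coe_trans, Function.comp_apply,
      Homeomorph.toOpenPartialHomeomorph_apply]
    rw [hφ₂F _ hx₂, φ₂.right_inv hx.2, hφ₁F x hx.1, h0, hJ]
    rfl

end Morse

section Parametrization

/-- `g` is a homeomorphism onto a relatively open subset of `C`. -/
structure IsOpenParametrization {Y X : Type*} [TopologicalSpace Y] [TopologicalSpace X]
    (g : Y → X) (C : Set X) : Prop where
  isEmbedding : IsEmbedding g
  exists_isOpen : ∃ O, IsOpen O ∧ Set.range g = O ∩ C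

namespace IsOpenParametrization

section Topological

variable {Y X : Type*} [TopologicalSpace Y] [TopologicalSpace X] {g : Y → X} {C : Set X}

lemma mem (hg : IsOpenParametrization g C) (y : Y) : g y ∈ C := by
  obtain ⟨O, -, hO⟩ := hg.exists_isOpen
  exact (hO ▸ Set.mem_range_self y : g y ∈ O ∩ C).2

lemma eventually_mem_range (hg : IsOpenParametrization g C) (y : Y) :
    ∀ᶠ x in 𝓝 (g y), x ∈ C → x ∈ Set.range g := by
  obtain ⟨O, hO, hgO⟩ := hg.exists_isOpen
  filter_upwards [hO.mem_nhds (hgO ▸ Set.mem_range_self y : g y ∈ O ∩ C).1] with x hxO hxC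
  exact hgO ▸ ⟨hxO, hxC⟩

lemma comp_isOpenEmbedding (hg : IsOpenParametrization g C) {Z : Type*} [TopologicalSpace Z]
    {k : Z → Y} (hk : IsOpenEmbedding k) : IsOpenParametrization (g ∘ k) C where
  isEmbedding := hg.isEmbedding.comp hk.isEmbedding
  exists_isOpen := by
    obtain ⟨O, hO, hgO⟩ := hg.exists_isOpen
    obtain ⟨O', hO', hkO'⟩ := hg.isEmbedding.isOpen_iff.1 hk.isOpen_range
    refine ⟨O' ∩ O, hO'.inter hO, ?_⟩
    rw [Set.range_comp, ← hkO', Set.image_preimage_eq_inter_range, hgO, Set.inter_assoc]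

end Topological

variable {E E' X : Type*} [NormedAddCommGroup E] [NormedSpace ℝ E] [CompleteSpace E]
  [NormedAddCommGroup E'] [NormedSpace ℝ E'] [NormedAddCommGroup X] [NormedSpace ℝ X]
  {g : E → X} {C : Set X}

lemma exists_lift (hg : IsOpenParametrization g C) {y₀ : E} {g' : E →L[ℝ] X}
    (hg' : HasStrictFDerivAt g g' y₀) (hinv : g'.HasLeftInverse) {f : E' → X} {x₀ : E'}
    (hf : DifferentiableAt ℝ f x₀) (hfC : ∀ᶠ x in 𝓝 x₀, f x ∈ C) (h0 : f x₀ = g y₀) :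
    ∃ h : E' → E, h x₀ = y₀ ∧ DifferentiableAt ℝ h x₀ ∧ ∀ᶠ x in 𝓝 x₀, g (h x) = f x := by
  obtain ⟨π, hπ⟩ := hinv
  have hπg : HasStrictFDerivAt (π ∘ g)
      ((ContinuousLinearEquiv.refl ℝ E : E ≃L[ℝ] E) : E →L[ℝ] E) y₀ := by
    refine (π.hasStrictFDerivAt.comp y₀ hg').congr_fderiv ?_
    ext v
    exact hπ v
  have hleft := hπg.eventually_left_inverse
  refine ⟨hπg.localInverse _ _ y₀ ∘ π ∘ f, ?_, ?_, ?_⟩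
  · simpa [h0] using hleft.self_of_nhds
  · refine DifferentiableAt.comp x₀ ?_ (π.differentiableAt.comp x₀ hf)
    rw [Function.comp_apply, h0]
    exact hπg.to_localInverse.hasFDerivAt.differentiableAt
  · rw [hg.isEmbedding.nhds_eq_comap, eventually_comap] at hleft
    have hlim : Tendsto f (𝓝 x₀) (𝓝 (g y₀)) := h0 ▸ hf.continuousAt.tendsto
    filter_upwards [hfC, hlim.eventually hleft, hlim.eventually (hg.eventually_mem_range y₀)]
      with x hxC hxleft hxrange
    obtain ⟨y, hy⟩ := hxrange hxC
    simp only [Function.comp_apply] at hxleft ⊢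
    rw [← hy, hxleft y hy]

end IsOpenParametrization

end Parametrization

section MorseChart

variable {E X : Type*} [NormedAddCommGroup E] [NormedSpace ℝ E]
  [NormedAddCommGroup X] [NormedSpace ℝ X] {g : E → X} {C : Set X} {P : X → ℝ}

/-- A `C³` parametrization of a relatively open subset of `C`, immersive at `0`, through which
`P` has a nondegenerate critical point at `0`. -/
structure IsMorseChart (g : E → X) (C : Set X) (P : X → ℝ) : Prop
    extends IsOpenParametrization g C where
  contDiff : ContDiff ℝ 3 g
  injective_fderiv : Function.Injective (fderiv ℝ g 0)
  contDiff_comp : ContDiff ℝ 3 fun x ↦ P (g x)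
  fderiv_comp_eq_zero : fderiv ℝ (fun x ↦ P (g x)) 0 = 0
  bijective_hessian : Function.Bijective (fderiv ℝ (fderiv ℝ fun x ↦ P (g x)) 0)

/-- A differentiable self-map of the ambient space that preserves `C` and the restriction of `P`
to `C`. -/
structure IsSymmetry (A : X → X) (C : Set X) (P : X → ℝ) : Prop where
  differentiable : Differentiable ℝ A
  mapsTo : Set.MapsTo A C C
  apply_eq : ∀ q ∈ C, P (A q) = P q

lemma eventually_fderiv_eq_zero_imp_eq [CompleteSpace E] {F : E → ℝ} {x₀ : E}
    (hF : DifferentiableAt ℝ (fderiv ℝ F) x₀)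
    (hF' : Function.Bijective (fderiv ℝ (fderiv ℝ F) x₀)) :
    ∀ᶠ x in 𝓝 x₀, fderiv ℝ F x = 0 → x = x₀ := by
  let e : E ≃L[ℝ] (E →L[ℝ] ℝ) := ContinuousLinearEquiv.ofBijective (fderiv ℝ (fderiv ℝ F) x₀)
    (LinearMap.ker_eq_bot.2 hF'.1) (LinearMap.range_eq_top.2 hF'.2)
  have hne := hF.hasFDerivAt.eventually_ne (c := 0) ⟨_, e.antilipschitz⟩
  rw [eventually_nhdsWithin_iff] at hne
  filter_upwards [hne] with x hx h
  exact by_contra fun hxx₀ ↦ hx hxx₀ h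

namespace IsMorseChart

variable [FiniteDimensional ℝ X]

lemma finiteDimensional (hg : IsMorseChart g C P) : FiniteDimensional ℝ E :=
  FiniteDimensional.of_injective (fderiv ℝ g 0).toLinearMap hg.injective_fderiv

lemma hasLeftInverse_fderiv (hg : IsMorseChart g C P) : (fderiv ℝ g 0).HasLeftInverse :=
  .of_injective_of_finiteDimensional hg.injective_fderiv

theorem eventually_eq_of_isSymmetry (hg : IsMorseChart g C P) :
    ∀ᶠ q in 𝓝 (g 0), q ∈ C → ∀ A, IsSymmetry A C P → A q = g 0 → q = g 0 := by
  have := hg.finiteDimensional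
  have : CompleteSpace E := FiniteDimensional.complete ℝ E
  have hiso := eventually_fderiv_eq_zero_imp_eq
    ((hg.contDiff_comp.fderiv_right (m := 2) (by norm_num)).differentiable (by norm_num) 0)
    hg.bijective_hessian
  rw [hg.isEmbedding.nhds_eq_comap, eventually_comap] at hiso
  filter_upwards [hiso, hg.eventually_mem_range 0] with q hq hrange hqC A hA hAq
  obtain ⟨x, rfl⟩ := hrange hqC
  obtain ⟨h, hx, hh, hgh⟩ := hg.exists_lift
    (hg.contDiff.contDiffAt.hasStrictFDerivAt (by norm_num)) hg.hasLeftInverse_fderiv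
    (f := A ∘ g) (hA.differentiable.comp (hg.contDiff.differentiable (by norm_num)) x)
    (.of_forall fun y ↦ hA.mapsTo (hg.mem y)) hAq
  have hinv : (fun y ↦ P (g y)) =ᶠ[𝓝 x] (fun y ↦ P (g y)) ∘ h := by
    filter_upwards [hgh] with y hy
    simp [hy, hA.apply_eq _ (hg.mem y)]
  have hcrit : fderiv ℝ (fun y ↦ P (g y)) x = 0 := by
    rw [hinv.fderiv_eq, fderiv_comp x (hg.contDiff_comp.differentiable (by norm_num) _) hh, hx,
      hg.fderiv_comp_eq_zero, ContinuousLinearMap.zero_comp]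
  rw [hq x rfl hcrit]

theorem exists_fderiv_comp_eq_of_isSymmetry (hg : IsMorseChart g C P) {A : X →L[ℝ] X}
    (hA : IsSymmetry A C P) (hA0 : A (g 0) = g 0) :
    ∃ h : E →L[ℝ] E, (∀ x, fderiv ℝ g 0 (h x) = A (fderiv ℝ g 0 x)) ∧
      ∀ x, fderiv ℝ (fderiv ℝ fun x ↦ P (g x)) 0 (h x) (h x) =
        fderiv ℝ (fderiv ℝ fun x ↦ P (g x)) 0 x x := by
  have := hg.finiteDimensional
  have : CompleteSpace E := FiniteDimensional.complete ℝ E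
  have hgd := hg.contDiff.differentiable (by norm_num)
  obtain ⟨h, hx, hh, hgh⟩ := hg.exists_lift
    (hg.contDiff.contDiffAt.hasStrictFDerivAt (by norm_num)) hg.hasLeftInverse_fderiv
    (f := A ∘ g) (hA.differentiable.comp hgd 0)
    (.of_forall fun y ↦ hA.mapsTo (hg.mem y)) hA0
  refine ⟨fderiv ℝ h 0, fun x ↦ ?_, fun x ↦ ?_⟩
  · have hderiv : fderiv ℝ (g ∘ h) 0 = fderiv ℝ (A ∘ g) 0 := EventuallyEq.fderiv_eq hgh
    rw [fderiv_comp 0 (hgd _) hh, hx,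
      fderiv_comp 0 A.differentiableAt (hgd 0), A.fderiv] at hderiv
    exact congr($hderiv x)
  · obtain ⟨B, hB, hB0⟩ :=
      exists_isHadamardForm_of_contDiff hg.contDiff_comp hg.fderiv_comp_eq_zero
    rw [← hB0]
    refine hB.apply_fderiv_eq_of_comp_eq hx hh ?_ x
    filter_upwards [hgh] with y hy
    simp [hy, hA.apply_eq _ (hg.mem y)]

end IsMorseChart

end MorseChart

section QuadraticForms

open Module (End)

lemma exists_linearEquiv_sum_mul_sq {M : Type*} [AddCommGroup M] [Module ℝ M]
    [FiniteDimensional ℝ M] (b : M →ₗ[ℝ] M →ₗ[ℝ] ℝ) (hsymm : ∀ x y, b x y = b y x)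
    (hnondeg : ∀ x, (∀ y, b x y = 0) → x = 0) :
    ∃ (r : ℕ) (w : Fin r → ℝ) (J : M ≃ₗ[ℝ] (Fin r → ℝ)), (∀ i, w i = -1 ∨ w i = 1) ∧
      ∀ x, b x x = ∑ i, w i * J x i ^ 2 := by
  have hassoc : QuadraticMap.associated (R := ℝ) (LinearMap.BilinMap.toQuadraticMap b) = b :=
    QuadraticMap.associated_left_inverse ℝ hsymm
  obtain ⟨w, hw, ⟨e⟩⟩ := QuadraticForm.equivalent_one_neg_one_weighted_sum_squared
    (LinearMap.BilinMap.toQuadraticMap b) (by rwa [hassoc])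
  refine ⟨_, w, e.toLinearEquiv, hw, fun x ↦ ?_⟩
  have hx := e.map_app x
  rw [QuadraticMap.weightedSumSquares_apply, LinearMap.BilinMap.toQuadraticMap_apply] at hx
  rw [← hx]
  simp [sq]

section Copies

variable {E K : Type*} [AddCommGroup E] [Module ℝ E] [Fintype K]
  {p τ : K → End ℝ E} {k₁ : K}

/-- Decomposition of `E` into copies of the range of one of the projections of a decomposition
of the identity whose ranges are interchanged by the involutions `τ k`. -/
def equivPiRange (hp : CompleteOrthogonalIdempotents p) (hτ : ∀ k, τ k * τ k = 1)
    (hτp : ∀ k, τ k * p k = p k₁ * τ k) : E ≃ₗ[ℝ] (K → (p k₁).range) where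
  toFun x k := ⟨τ k (p k x), τ k x, congr($(hτp k) x).symm⟩
  invFun c := ∑ k, τ k (c k)
  map_add' x y := by ext; simp
  map_smul' a x := by ext; simp
  left_inv x := by
    have hττ (k : K) (y : E) : τ k (τ k y) = y := congr($(hτ k) y)
    simpa [hττ] using congr($hp.complete x)
  right_inv c := by
    classical
    funext l
    have hττ (k : K) (y : E) : τ k (τ k y) = y := congr($(hτ k) y)
    have hτpc (k : K) (y : E) : τ k (p k y) = p k₁ (τ k y) := congr($(hτp k) y)
    have hτc (k : K) : p k (τ k (c k)) = τ k (c k) := by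
      obtain ⟨y, hy⟩ := (c k).2
      rw [← hττ k (p k (τ k (c k))), hτpc, hττ, ← hy]
      exact congr(τ k ($(hp.idem k₁) y))
    have hterm (k : K) : p l (τ k (c k)) = if l = k then τ k (c k) else 0 := by
      rw [← hτc k]
      split_ifs with h
      · rw [h, hτc, hτc]
      · exact congr($(hp.ortho h) (τ k (c k)))
    ext
    simp [hterm, hττ]

lemma coe_equivPiRange_apply (hp : CompleteOrthogonalIdempotents p) (hτ : ∀ k, τ k * τ k = 1)
    (hτp : ∀ k, τ k * p k = p k₁ * τ k) (x : E) (k : K) :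
    (equivPiRange hp hτ hτp x k : E) = τ k (p k x) := rfl

lemma apply_self_eq_sum_of_orthogonal (hp : CompleteOrthogonalIdempotents p)
    {H : E →ₗ[ℝ] E →ₗ[ℝ] ℝ} (hH : ∀ k l, k ≠ l → ∀ x y, H (p k x) (p l y) = 0) (x y : E) :
    H x y = ∑ k, H (p k x) (p k y) := by
  have hsum (z : E) : ∑ k, p k z = z := by simpa using congr($hp.complete z)
  conv_lhs => rw [← hsum x, ← hsum y]
  simp only [map_sum, LinearMap.sum_apply]
  exact Finset.sum_congr rfl fun k _ ↦
    Finset.sum_eq_single k (fun l _ hl ↦ hH l k hl x y) (by simp)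

lemma eq_zero_of_orthogonal_range (hp : CompleteOrthogonalIdempotents p)
    {H : E →ₗ[ℝ] E →ₗ[ℝ] ℝ} (hH : ∀ k l, k ≠ l → ∀ x y, H (p k x) (p l y) = 0)
    (hnondeg : ∀ x, (∀ y, H x y = 0) → x = 0) {k₁ : K} {x : E} (hx : x ∈ (p k₁).range)
    (hxH : ∀ y ∈ (p k₁).range, H x y = 0) : x = 0 := by
  obtain ⟨z, rfl⟩ := hx
  refine hnondeg _ fun y ↦ ?_
  have hy : ∑ k, p k y = y := by simpa using congr($hp.complete y)
  rw [← hy, map_sum]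
  refine Finset.sum_eq_zero fun k _ ↦ ?_
  obtain rfl | hk := eq_or_ne k₁ k
  · exact hxH _ ⟨y, rfl⟩
  · exact hH _ _ hk _ _

theorem exists_linearEquiv_sum_mul_norm_sq [FiniteDimensional ℝ E]
    {P : Type*} [NormedAddCommGroup P] [InnerProductSpace ℝ P] (b : OrthonormalBasis K ℝ P)
    (hp : CompleteOrthogonalIdempotents p) (hτ : ∀ k, τ k * τ k = 1)
    (hτp : ∀ k, τ k * p k = p k₁ * τ k) {H : E →ₗ[ℝ] E →ₗ[ℝ] ℝ} (hsymm : ∀ x y, H x y = H y x)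
    (hnondeg : ∀ x, (∀ y, H x y = 0) → x = 0)
    (hH : ∀ k l, k ≠ l → ∀ x y, H (p k x) (p l y) = 0)
    (hτH : ∀ k x, H (τ k x) (τ k x) = H x x) :
    ∃ (r : ℕ) (w : Fin r → ℝ) (J : E ≃ₗ[ℝ] (Fin r → P)), (∀ i, w i = -1 ∨ w i = 1) ∧
      ∀ x, H x x = ∑ i, w i * ‖J x i‖ ^ 2 := by
  obtain ⟨r, w, J, hw, hJ⟩ := exists_linearEquiv_sum_mul_sq
    (H.domRestrict₁₂ (p k₁).range (p k₁).range) (fun x y ↦ hsymm x y) fun x hx ↦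
      Subtype.ext (eq_zero_of_orthogonal_range hp hH hnondeg x.2 fun y hy ↦ hx ⟨y, hy⟩)
  let swap : (K → Fin r → ℝ) ≃ₗ[ℝ] (Fin r → K → ℝ) :=
    (Equiv.piComm fun _ _ ↦ ℝ).toLinearEquiv ⟨fun _ _ ↦ rfl, fun _ _ ↦ rfl⟩
  let assemble : (K → ℝ) ≃ₗ[ℝ] P :=
    (WithLp.linearEquiv 2 ℝ (K → ℝ)).symm.trans b.repr.symm.toLinearEquiv
  have hassemble (y : K → ℝ) : ‖assemble y‖ ^ 2 = ∑ k, y k ^ 2 := by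
    simp [assemble, EuclideanSpace.norm_sq_eq]
  refine ⟨r, w, (equivPiRange hp hτ hτp).trans ((LinearEquiv.piCongrRight fun _ ↦ J).trans
    (swap.trans (LinearEquiv.piCongrRight fun _ ↦ assemble))), hw, fun x ↦ ?_⟩
  calc H x x = ∑ k, H (τ k (p k x)) (τ k (p k x)) := by
        rw [apply_self_eq_sum_of_orthogonal hp hH]
        simp only [hτH]
    _ = ∑ k, ∑ i, w i * J (equivPiRange hp hτ hτp x k) i ^ 2 := by
        simp only [← hJ, LinearMap.domRestrict₁₂_apply, coe_equivPiRange_apply]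
    _ = ∑ i, w i * ∑ k, J (equivPiRange hp hτ hτp x k) i ^ 2 := by
        rw [Finset.sum_comm]
        simp only [Finset.mul_sum]
    _ = _ := by
        simp only [LinearEquiv.trans_apply, LinearEquiv.piCongrRight_apply, hassemble]
        rfl

end Copies

section RankOne

variable {ι P : Type*} [Fintype ι]

/-- The linear endomorphism `v ↦ v + t (n_i / m_i)_i ⊗ ∑ j, n_j v_j` of `P^ι`. -/
noncomputable def addSmulSum [AddCommGroup P] [Module ℝ P] (m n : ι → ℝ) (t : ℝ) :
    (ι → P) →ₗ[ℝ] (ι → P) :=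
  LinearMap.id + LinearMap.pi fun i ↦ (t * (n i / m i)) • ∑ j, n j • LinearMap.proj j

lemma addSmulSum_apply [AddCommGroup P] [Module ℝ P] (m n : ι → ℝ) (t : ℝ) (v : ι → P) (i : ι) :
    addSmulSum m n t v i = v i + (t * (n i / m i)) • ∑ j, n j • v j := by
  simp [addSmulSum]

lemma sum_smul_addSmulSum [AddCommGroup P] [Module ℝ P] (m n : ι → ℝ) (t : ℝ) (v : ι → P) :
    ∑ i, n i • addSmulSum m n t v i = (1 + t * ∑ i, n i ^ 2 / m i) • ∑ i, n i • v i := by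
  simp only [addSmulSum_apply, smul_add, Finset.sum_add_distrib, smul_smul, ← Finset.sum_smul,
    add_smul, one_smul, Finset.mul_sum]
  congr! 3
  ring

lemma addSmulSum_addSmulSum [AddCommGroup P] [Module ℝ P] (m n : ι → ℝ) {s t : ℝ}
    (h : t + s * (1 + t * ∑ i, n i ^ 2 / m i) = 0) (v : ι → P) :
    addSmulSum m n s (addSmulSum m n t v) = v := by
  ext i
  rw [addSmulSum_apply, sum_smul_addSmulSum, addSmulSum_apply, add_assoc, smul_smul, ← add_smul,
    add_eq_left]
  convert zero_smul ℝ _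
  linear_combination n i / m i * h

lemma sum_mul_norm_addSmulSum_sq [NormedAddCommGroup P] [InnerProductSpace ℝ P] {m : ι → ℝ}
    (hm : ∀ i, m i ≠ 0) (n : ι → ℝ) (t : ℝ) (v : ι → P) :
    ∑ i, m i * ‖addSmulSum m n t v i‖ ^ 2 = ∑ i, m i * ‖v i‖ ^ 2 +
      t * (2 + t * ∑ i, n i ^ 2 / m i) * ‖∑ i, n i • v i‖ ^ 2 := by
  set S := ∑ i, n i • v i with hS
  have hterm (i : ι) : m i * ‖addSmulSum m n t v i‖ ^ 2 = m i * ‖v i‖ ^ 2 +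
      2 * t * inner ℝ (n i • v i) S + t ^ 2 * ‖S‖ ^ 2 * (n i ^ 2 / m i) := by
    rw [addSmulSum_apply, norm_add_sq_real, norm_smul, mul_pow, Real.norm_eq_abs, sq_abs,
      inner_smul_left, inner_smul_right, ← hS]
    have := hm i
    simp only [conj_trivial]
    field_simp
  simp only [hterm, Finset.sum_add_distrib, ← Finset.mul_sum, ← sum_inner, ← hS,
    real_inner_self_eq_norm_sq]
  ring

theorem exists_linearEquiv_sum_mul_norm_sq_sub [NormedAddCommGroup P] [InnerProductSpace ℝ P]
    {m n : ι → ℝ} (hm : ∀ i, m i ≠ 0) {κ : ℝ} (hκ : 0 < 1 - κ * ∑ i, n i ^ 2 / m i) :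
    ∃ K : (ι → P) ≃ₗ[ℝ] (ι → P), ∀ v, ∑ i, m i * ‖K v i‖ ^ 2 =
      ∑ i, m i * ‖v i‖ ^ 2 - κ * ‖∑ i, n i • v i‖ ^ 2 := by
  obtain ⟨q, hq, hqκ⟩ : ∃ q, 0 < q ∧ q ^ 2 = 1 - κ * ∑ i, n i ^ 2 / m i :=
    ⟨_, Real.sqrt_pos.2 hκ, Real.sq_sqrt hκ.le⟩
  obtain ⟨t, ht⟩ : ∃ t, t = -κ / (1 + q) := ⟨_, rfl⟩
  have htq : 1 + t * ∑ i, n i ^ 2 / m i = q := by rw [ht]; field_simp; linarith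
  have htκ : t * (1 + q) = -κ := by rw [ht]; field_simp
  refine ⟨LinearEquiv.ofLinearMap (addSmulSum m n t) (addSmulSum m n (-(t / q))) ?_ ?_, fun v ↦ ?_⟩
  · refine LinearMap.ext <| addSmulSum_addSmulSum m n ?_
    linear_combination -(t / q) * htq - div_mul_cancel₀ t hq.ne'
  · refine LinearMap.ext <| addSmulSum_addSmulSum m n ?_
    rw [htq]
    field_simp
    ring
  · rw [LinearEquiv.coe_ofLinearMap, sum_mul_norm_addSmulSum_sq hm]
    linear_combination ‖∑ i, n i • v i‖ ^ 2 * (htκ + t * htq)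

end RankOne

end QuadraticForms

section Coordinates

open Module (End)

variable {E M K : Type*} [AddCommGroup E] [Module ℝ E] [AddCommGroup M] [Module ℝ M]
  [DecidableEq K] {L : E →ₗ[ℝ] (K → M)}

lemma apply_map_map_eq_of_apply_self_eq {H : E →ₗ[ℝ] E →ₗ[ℝ] ℝ} (hsymm : ∀ x y, H x y = H y x)
    {h : End ℝ E} (hH : ∀ x, H (h x) (h x) = H x x) (x y : E) : H (h x) (h y) = H x y := by
  have hxy := hH (x + y)
  simp only [map_add, LinearMap.add_apply] at hxy
  linarith [hsymm (h x) (h y), hsymm x y, hH x, hH y]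

/-- The endomorphism `x ↦ (x - h x) / 2`: the projection onto the `-1`-eigenspace of an
involution `h`. -/
noncomputable def negProj (h : End ℝ E) : End ℝ E := (1 / 2 : ℝ) • (1 - h)

lemma apply_negProj {k : K} {h : End ℝ E}
    (hh : ∀ x j, L (h x) j = if j = k then -L x j else L x j) (x : E) (j : K) :
    L (negProj h x) j = if j = k then L x j else 0 := by
  simp only [negProj, LinearMap.smul_apply, LinearMap.sub_apply, Module.End.one_apply, map_smul,
    map_sub, Pi.smul_apply, Pi.sub_apply, hh]
  split_ifs
  · rw [sub_neg_eq_add, ← two_smul ℝ, smul_smul]; norm_num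
  · simp

lemma completeOrthogonalIdempotents_negProj [Fintype K] (hL : Function.Injective L)
    {h : K → End ℝ E} (hh : ∀ k x j, L (h k x) j = if j = k then -L x j else L x j) :
    CompleteOrthogonalIdempotents fun k ↦ negProj (h k) := by
  rw [CompleteOrthogonalIdempotents.iff_ortho_complete]
  refine ⟨fun k l hkl ↦ LinearMap.ext fun x ↦ hL <| funext fun j ↦ ?_,
    LinearMap.ext fun x ↦ hL <| funext fun j ↦ ?_⟩
  · simp only [Module.End.mul_apply, apply_negProj (hh _), LinearMap.zero_apply, map_zero,
      Pi.zero_apply]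
    grind
  · simp [apply_negProj (hh _)]

lemma apply_negProj_negProj_eq_zero (hL : Function.Injective L) {h : K → End ℝ E}
    (hh : ∀ k x j, L (h k x) j = if j = k then -L x j else L x j) {H : E →ₗ[ℝ] E →ₗ[ℝ] ℝ}
    (hsymm : ∀ x y, H x y = H y x) (hH : ∀ k x, H (h k x) (h k x) = H x x) {k l : K}
    (hkl : k ≠ l) (x y : E) : H (negProj (h k) x) (negProj (h l) y) = 0 := by
  have hneg : h k (negProj (h k) x) = -negProj (h k) x := hL <| funext fun j ↦ by
    simp only [hh, apply_negProj (hh _), map_neg, Pi.neg_apply]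
    grind
  have hfix : h k (negProj (h l) y) = negProj (h l) y := hL <| funext fun j ↦ by
    simp only [hh, apply_negProj (hh _)]
    grind
  have hinv := apply_map_map_eq_of_apply_self_eq hsymm (hH k) (negProj (h k) x) (negProj (h l) y)
  rw [hneg, hfix, map_neg, LinearMap.neg_apply] at hinv
  linarith

theorem exists_linearEquiv_sum_mul_norm_sq_of_coordinates [FiniteDimensional ℝ E] [Fintype K]
    {P : Type*} [NormedAddCommGroup P] [InnerProductSpace ℝ P] (b : OrthonormalBasis K ℝ P)
    (k₁ : K) (hL : Function.Injective L) {h τ : K → End ℝ E}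
    (hh : ∀ k x j, L (h k x) j = if j = k then -L x j else L x j)
    (hτ : ∀ k x j, L (τ k x) j = L x (Equiv.swap k k₁ j))
    {H : E →ₗ[ℝ] E →ₗ[ℝ] ℝ} (hsymm : ∀ x y, H x y = H y x)
    (hnondeg : ∀ x, (∀ y, H x y = 0) → x = 0)
    (hhH : ∀ k x, H (h k x) (h k x) = H x x) (hτH : ∀ k x, H (τ k x) (τ k x) = H x x) :
    ∃ (r : ℕ) (w : Fin r → ℝ) (J : E ≃ₗ[ℝ] (Fin r → P)), (∀ i, w i = -1 ∨ w i = 1) ∧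
      ∀ x, H x x = ∑ i, w i * ‖J x i‖ ^ 2 := by
  refine exists_linearEquiv_sum_mul_norm_sq b (completeOrthogonalIdempotents_negProj hL hh)
    (τ := τ) (k₁ := k₁) (fun k ↦ LinearMap.ext fun x ↦ hL <| funext fun j ↦ ?_)
    (fun k ↦ LinearMap.ext fun x ↦ hL <| funext fun j ↦ ?_) hsymm hnondeg
    (fun k l hkl ↦ apply_negProj_negProj_eq_zero hL hh hsymm hhH hkl) hτH
  · simp [hτ]
  · have hj : Equiv.swap k k₁ j = k ↔ j = k₁ := by rw [Equiv.swap_apply_eq_iff]; simp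
    simp only [Module.End.mul_apply, hτ, apply_negProj (hh _), hj]

end Coordinates

section Reflections

variable {F : Type*} [NormedAddCommGroup F] [InnerProductSpace ℝ F]

lemma reflection_orthogonal_singleton_apply (u x : F) :
    (ℝ ∙ u)ᗮ.reflection x = x - (2 * (inner ℝ u x / ‖u‖ ^ 2)) • u := by
  rw [Submodule.reflection_orthogonal_apply, Submodule.reflection_singleton_apply]
  simp [mul_smul, two_smul]

lemma continuousAt_reflection_orthogonal_singleton {u : F} (hu : u ≠ 0) (x : F) :
    ContinuousAt (fun u ↦ (ℝ ∙ u)ᗮ.reflection x) u := by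
  simp only [reflection_orthogonal_singleton_apply]
  have : ‖u‖ ^ 2 ≠ 0 := by simpa using hu
  fun_prop (disch := assumption)

lemma exists_ne_zero_inner_eq_zero_of_two_lt_finrank (hF : 2 < Module.finrank ℝ F) (e p : F) :
    ∃ b : F, b ≠ 0 ∧ inner ℝ b e = 0 ∧ inner ℝ b p = 0 := by
  have : FiniteDimensional ℝ F := Module.finite_of_finrank_pos (by omega)
  have hne : (Submodule.span ℝ {e, p})ᗮ ≠ ⊥ := by
    rw [Ne, Submodule.orthogonal_eq_bot_iff]
    intro htop
    have hcard : Module.finrank ℝ (Submodule.span ℝ {e, p}) ≤ 2 := by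
      classical
      refine (finrank_span_le_card _).trans ?_
      simpa using Finset.card_le_two
    rw [htop, finrank_top] at hcard
    omega
  obtain ⟨b, hb, hb0⟩ := Submodule.exists_mem_ne_zero_of_ne_bot hne
  rw [Submodule.mem_orthogonal'] at hb
  exact ⟨b, hb0, hb e (Submodule.subset_span (by simp)), hb p (Submodule.subset_span (by simp))⟩

theorem exists_linearIsometryEquiv_tendsto_apply_ne (hF : 2 < Module.finrank ℝ F) {e p : F}
    (hp : p ∉ ℝ ∙ e) :
    ∃ ρ : ℝ → F ≃ₗᵢ[ℝ] F, (∀ t, ρ t e = e) ∧ (∀ x, Tendsto (fun t ↦ ρ t x) (𝓝 0) (𝓝 x)) ∧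
      ∀ t ≠ 0, ρ t p ≠ p := by
  obtain ⟨b, hb0, hbe, hbp⟩ := exists_ne_zero_inner_eq_zero_of_two_lt_finrank hF e p
  obtain ⟨c, hce, hcp⟩ : ∃ c : F, inner ℝ c e = 0 ∧ inner ℝ c p ≠ 0 := by
    rw [← (ℝ ∙ e).orthogonal_orthogonal, Submodule.mem_orthogonal] at hp
    push Not at hp
    simpa only [Submodule.mem_orthogonal_singleton_iff_inner_left] using hp
  have hfix {u x : F} (h : inner ℝ u x = 0) : (ℝ ∙ u)ᗮ.reflection x = x := by
    simp [reflection_orthogonal_singleton_apply, h]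
  refine ⟨fun t ↦ (ℝ ∙ b)ᗮ.reflection.trans (ℝ ∙ (b + t • c))ᗮ.reflection, fun t ↦ ?_,
    fun x ↦ ?_, fun t ht h ↦ ?_⟩
  · rw [LinearIsometryEquiv.trans_apply, hfix hbe, hfix]
    simp [inner_add_left, inner_smul_left, hbe, hce]
  · have hcont : ContinuousAt (fun t : ℝ ↦ (ℝ ∙ (b + t • c))ᗮ.reflection ((ℝ ∙ b)ᗮ.reflection x))
        0 := by
      refine ContinuousAt.comp (g := fun u ↦ (ℝ ∙ u)ᗮ.reflection ((ℝ ∙ b)ᗮ.reflection x)) ?_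
        (by fun_prop)
      exact continuousAt_reflection_orthogonal_singleton (by simpa using hb0) _
    simpa [ContinuousAt] using hcont
  · have hinner : inner ℝ (b + t • c) p ≠ 0 := by
      simp [inner_add_left, inner_smul_left, hbp, ht, hcp]
    rw [LinearIsometryEquiv.trans_apply, hfix hbp, Submodule.reflection_eq_self_iff,
      Submodule.mem_orthogonal_singleton_iff_inner_right] at h
    exact hinner h

variable {e : F} {K : Type*} [Fintype K] (b : OrthonormalBasis K ℝ (ℝ ∙ e)ᗮ)

lemma inner_coe_coe_eq_ite [DecidableEq K] (j k : K) :
    inner ℝ (b j : F) (b k : F) = if j = k then 1 else 0 :=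
  orthonormal_iff_ite.1 b.orthonormal j k

lemma mem_span_singleton_of_inner_eq_zero {x : F} (hx : ∀ k, inner ℝ (b k : F) x = 0) :
    x ∈ ℝ ∙ e := by
  rw [← (ℝ ∙ e).orthogonal_orthogonal, Submodule.mem_orthogonal]
  intro z hz
  have hsum : ∑ k, inner ℝ (b k) ⟨z, hz⟩ • (b k : F) = z := by
    simpa using congr(($(b.sum_repr' ⟨z, hz⟩) : F))
  rw [← hsum, sum_inner]
  exact Finset.sum_eq_zero fun k _ ↦ by rw [inner_smul_left, hx, mul_zero]

lemma inner_reflection_orthogonal_singleton [DecidableEq K] (k j : K) (x : F) :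
    inner ℝ (b j : F) ((ℝ ∙ (b k : F))ᗮ.reflection x) =
      if j = k then -inner ℝ (b j : F) x else inner ℝ (b j : F) x := by
  rw [← Submodule.reflection_symm, ← LinearIsometryEquiv.inner_map_eq_flip]
  split_ifs with h
  · rw [h, Submodule.reflection_orthogonalComplement_singleton_eq_neg, inner_neg_left]
  · rw [(Submodule.reflection_eq_self_iff _).2]
    rw [Submodule.mem_orthogonal_singleton_iff_inner_right, inner_coe_coe_eq_ite,
      if_neg (Ne.symm h)]

lemma inner_reflection_orthogonal_singleton_sub [DecidableEq K] (k l j : K) (x : F) :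
    inner ℝ (b j : F) ((ℝ ∙ (b k - b l : F))ᗮ.reflection x) =
      inner ℝ (b (Equiv.swap k l j) : F) x := by
  rw [← Submodule.reflection_symm, ← LinearIsometryEquiv.inner_map_eq_flip]
  congr 1
  have hswap : (ℝ ∙ (b k - b l : F))ᗮ.reflection (b k : F) = b l :=
    Submodule.reflection_sub <|
      (b.orthonormal.norm_eq_one k).trans (b.orthonormal.norm_eq_one l).symm
  obtain rfl | hjk := eq_or_ne j k
  · rw [hswap, Equiv.swap_apply_left]
  obtain rfl | hjl := eq_or_ne j l
  · rw [Equiv.swap_apply_right]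
    exact (Submodule.reflection_involutive _).eq_iff.1 hswap |>.symm
  · rw [Equiv.swap_apply_of_ne_of_ne hjk hjl, Submodule.reflection_eq_self_iff,
      Submodule.mem_orthogonal_singleton_iff_inner_right, inner_sub_left, inner_coe_coe_eq_ite,
      inner_coe_coe_eq_ite, if_neg hjk.symm, if_neg hjl.symm, sub_zero]

end Reflections

section Linkage

variable {d : ℕ} [NeZero d] {V : Type} {E : Set (V × V)} {ℓ : V × V → ℝ} {xs xe : V}

lemma norm_firstBasis : ‖firstBasis d‖ = 1 := by simp [firstBasis]

lemma norm_apply_eq_inner_of_mem_reducedConf {q : V → EuclideanSpace ℝ (Fin d)}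
    (hq : q ∈ reducedConf d V E ℓ xs xe) : ‖q xe‖ = inner ℝ (firstBasis d) (q xe) := by
  obtain ⟨-, t, ht, hqt⟩ := hq
  rw [hqt, norm_smul, inner_smul_right, real_inner_self_eq_norm_sq, norm_firstBasis,
    Real.norm_of_nonneg ht.le, one_pow]

section Velocity

variable {F : Type*} [NormedAddCommGroup F] [NormedSpace ℝ F]
  {g : F → V → EuclideanSpace ℝ (Fin d)} {g' : F →L[ℝ] V → EuclideanSpace ℝ (Fin d)} {x₀ : F}

lemma velocity_base_eq_zero (hg : HasFDerivAt g g' x₀)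
    (hgC : ∀ x, g x ∈ reducedConf d V E ℓ xs xe) (x : F) : g' x xs = 0 := by
  have hgs := hasFDerivAt_pi'.1 hg xs
  simp only [(hgC _).1.2] at hgs
  exact congr($(hgs.unique (hasFDerivAt_const _ _)) x)

lemma inner_firstBasis_velocity_eq_zero (hg : HasFDerivAt g g' x₀)
    (hgC : ∀ x, g x ∈ reducedConf d V E ℓ xs xe) (hcrit : fderiv ℝ (fun x ↦ ‖g x xe‖) x₀ = 0)
    (x : F) : inner ℝ (firstBasis d) (g' x xe) = 0 := by
  simp only [norm_apply_eq_inner_of_mem_reducedConf (hgC _)] at hcrit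
  have hge := (innerSL ℝ (firstBasis d)).hasFDerivAt.comp x₀ (hasFDerivAt_pi'.1 hg xe)
  exact congr($(hge.fderiv.symm.trans hcrit) x)

lemma inner_edge_velocity_eq_zero (hg : HasFDerivAt g g' x₀)
    (hgC : ∀ x, g x ∈ reducedConf d V E ℓ xs xe) {e : V × V} (he : e ∈ E) (x : F) :
    inner ℝ (g x₀ e.1 - g x₀ e.2) (g' x e.1 - g' x e.2) = 0 := by
  have hsq := ((hasFDerivAt_pi'.1 hg e.1).sub (hasFDerivAt_pi'.1 hg e.2)).norm_sq
  simp only [(hgC _).1.1 e he, Pi.sub_apply] at hsq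
  simpa [← inner_sub_left, ← inner_sub_right] using congr($(hsq.unique (hasFDerivAt_const _ _)) x)

end Velocity

section Symmetries

variable [Fintype V]

lemma isSymmetry_piMap_linearIsometryEquiv
    {ρ : EuclideanSpace ℝ (Fin d) ≃ₗᵢ[ℝ] EuclideanSpace ℝ (Fin d)}
    (hρ : ρ (firstBasis d) = firstBasis d) :
    IsSymmetry (ContinuousLinearMap.piMap fun _ : V ↦ (ρ.toContinuousLinearEquiv : _ →L[ℝ] _))
      (reducedConf d V E ℓ xs xe) (fun q ↦ ‖q xe‖) where
  differentiable := ContinuousLinearMap.differentiable _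
  mapsTo := by
    rintro q ⟨⟨hqE, hqs⟩, t, ht, hqe⟩
    refine ⟨⟨fun e he ↦ ?_, by simp [hqs]⟩, t, ht, by simp [hqe, hρ]⟩
    simpa [← map_sub] using hqE e he
  apply_eq q _ := ρ.norm_map (q xe)

lemma isSymmetry_add_right {δ : V → EuclideanSpace ℝ (Fin d)} (hδs : δ xs = 0) (hδe : δ xe = 0)
    (hδE : ∀ e ∈ E, δ e.1 = δ e.2) :
    IsSymmetry (· + δ) (reducedConf d V E ℓ xs xe) (fun q ↦ ‖q xe‖) where
  differentiable := by fun_prop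
  mapsTo := by
    rintro q ⟨⟨hqE, hqs⟩, t, ht, hqe⟩
    exact ⟨⟨fun e he ↦ by simp [hδE e he, hqE e he], by simp [hqs, hδs]⟩, t, ht,
      by simp [hqe, hδe]⟩
  apply_eq q _ := by simp [hδe]

end Symmetries

variable {F : Type*} [NormedAddCommGroup F] [NormedSpace ℝ F] [Fintype V]
  {g : F → V → EuclideanSpace ℝ (Fin d)}

lemma contDiff_norm_apply_of_mem_reducedConf {n : WithTop ℕ∞} (hg : ContDiff ℝ n g)
    (hgC : ∀ x, g x ∈ reducedConf d V E ℓ xs xe) : ContDiff ℝ n fun x ↦ ‖g x xe‖ := by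
  simp only [norm_apply_eq_inner_of_mem_reducedConf (hgC _)]
  exact contDiff_const.inner ℝ (contDiff_pi.1 hg xe)

namespace IsMorseChart

theorem apply_mem_span_firstBasis (hg : IsMorseChart g (reducedConf d V E ℓ xs xe) fun q ↦ ‖q xe‖)
    (hd : 2 < d) (v : V) : g 0 v ∈ ℝ ∙ firstBasis d := by
  by_contra hv
  obtain ⟨ρ, hρe, hρ0, hρv⟩ := exists_linearIsometryEquiv_tendsto_apply_ne (by simpa using hd) hv
  have hlim : Tendsto (fun t v ↦ ρ t (g 0 v)) (𝓝 0) (𝓝 (g 0)) :=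
    tendsto_pi_nhds.2 fun v ↦ hρ0 (g 0 v)
  have hfix : ∀ᶠ t in 𝓝 0, (fun v ↦ ρ t (g 0 v)) = g 0 := by
    filter_upwards [hlim.eventually hg.eventually_eq_of_isSymmetry] with t ht
    have hsymm : (ρ t).symm (firstBasis d) = firstBasis d := by
      rw [LinearIsometryEquiv.symm_apply_eq, hρe]
    exact ht ((isSymmetry_piMap_linearIsometryEquiv (hρe t)).mapsTo (hg.mem 0)) _
      (isSymmetry_piMap_linearIsometryEquiv hsymm) (by ext1; simp)
  obtain ⟨t, hfix, ht⟩ :=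
    ((hfix.filter_mono nhdsWithin_le_nhds).and (self_mem_nhdsWithin (s := {0}ᶜ))).exists
  exact hρv t ht (congr_fun hfix v)

lemma velocity_eq_of_mem_span (hg : IsMorseChart g (reducedConf d V E ℓ xs xe) fun q ↦ ‖q xe‖)
    (hd : 2 < d) (hℓ : ∀ e ∈ E, 0 < ℓ e) {x : F}
    (hx : ∀ v, fderiv ℝ g 0 x v ∈ ℝ ∙ firstBasis d) {e : V × V} (he : e ∈ E) :
    fderiv ℝ g 0 x e.1 = fderiv ℝ g 0 x e.2 := by
  have hgd := (hg.contDiff.differentiable (by norm_num) 0).hasFDerivAt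
  have hinner := inner_edge_velocity_eq_zero hgd hg.mem he x
  obtain ⟨s, hs⟩ := Submodule.mem_span_singleton.1 <|
    sub_mem (hg.apply_mem_span_firstBasis hd e.1) (hg.apply_mem_span_firstBasis hd e.2)
  obtain ⟨t, ht⟩ := Submodule.mem_span_singleton.1 (sub_mem (hx e.1) (hx e.2))
  have hs0 : s ≠ 0 := by
    rintro rfl
    have hedge := (hg.mem 0).1.1 e he
    rw [← hs, zero_smul, norm_zero] at hedge
    exact (hℓ e he).ne hedge
  have ht0 : t = 0 := by
    simpa [← hs, ← ht, inner_smul_left, inner_smul_right, norm_firstBasis, hs0] using hinner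
  rw [← sub_eq_zero, ← ht, ht0, zero_smul]

theorem eq_zero_of_fderiv_apply_mem_span
    (hg : IsMorseChart g (reducedConf d V E ℓ xs xe) fun q ↦ ‖q xe‖) (hd : 2 < d)
    (hℓ : ∀ e ∈ E, 0 < ℓ e) {x : F} (hx : ∀ v, fderiv ℝ g 0 x v ∈ ℝ ∙ firstBasis d) : x = 0 := by
  have hgd := (hg.contDiff.differentiable (by norm_num) 0).hasFDerivAt
  have hxe : fderiv ℝ g 0 x xe = 0 := by
    obtain ⟨t, ht⟩ := Submodule.mem_span_singleton.1 (hx xe)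
    have hinner := inner_firstBasis_velocity_eq_zero hgd hg.mem hg.fderiv_comp_eq_zero x
    rw [← ht, inner_smul_right, real_inner_self_eq_norm_sq, norm_firstBasis, one_pow,
      mul_one] at hinner
    rw [← ht, hinner, zero_smul]
  have hsymm (t : ℝ) : IsSymmetry (· + t • fderiv ℝ g 0 x) (reducedConf d V E ℓ xs xe)
      (fun q ↦ ‖q xe‖) :=
    isSymmetry_add_right (by simp [velocity_base_eq_zero hgd hg.mem]) (by simp [hxe])
      fun e he ↦ by simp [hg.velocity_eq_of_mem_span hd hℓ hx he]
  have hlim : Tendsto (fun t : ℝ ↦ g 0 + t • fderiv ℝ g 0 x) (𝓝 0) (𝓝 (g 0)) :=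
    Continuous.tendsto' (by fun_prop) _ _ (by simp)
  have hfix : ∀ᶠ t in 𝓝[≠] (0 : ℝ), t ≠ 0 ∧ g 0 + t • fderiv ℝ g 0 x = g 0 := by
    filter_upwards [(hlim.eventually hg.eventually_eq_of_isSymmetry).filter_mono
      nhdsWithin_le_nhds, self_mem_nhdsWithin] with t ht ht0
    exact ⟨ht0, ht ((hsymm t).mapsTo (hg.mem 0)) _ (hsymm (-t)) (by simp)⟩
  obtain ⟨t, ht0, ht⟩ := hfix.exists
  exact hg.injective_fderiv (by simpa [ht0] using ht)

lemma exists_fderiv_comp_eq_of_linearIsometryEquiv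
    (hg : IsMorseChart g (reducedConf d V E ℓ xs xe) fun q ↦ ‖q xe‖) (hd : 2 < d)
    {ρ : EuclideanSpace ℝ (Fin d) ≃ₗᵢ[ℝ] EuclideanSpace ℝ (Fin d)}
    (hρ : ρ (firstBasis d) = firstBasis d) :
    ∃ h : F →L[ℝ] F, (∀ x v, fderiv ℝ g 0 (h x) v = ρ (fderiv ℝ g 0 x v)) ∧
      ∀ x, fderiv ℝ (fderiv ℝ fun x ↦ ‖g x xe‖) 0 (h x) (h x) =
        fderiv ℝ (fderiv ℝ fun x ↦ ‖g x xe‖) 0 x x := by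
  obtain ⟨h, hh, hhess⟩ := hg.exists_fderiv_comp_eq_of_isSymmetry
    (isSymmetry_piMap_linearIsometryEquiv hρ) <| funext fun v ↦ by
      obtain ⟨t, ht⟩ := Submodule.mem_span_singleton.1 (hg.apply_mem_span_firstBasis hd v)
      simp [← ht, hρ]
  exact ⟨h, fun x v ↦ congr_fun (hh x) v, hhess⟩

lemma exists_linearEquiv_hessian_eq_of_two_lt
    (hg : IsMorseChart g (reducedConf d V E ℓ xs xe) fun q ↦ ‖q xe‖) (hd : 2 < d)
    (hℓ : ∀ e ∈ E, 0 < ℓ e) {H : F →ₗ[ℝ] F →ₗ[ℝ] ℝ}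
    (hH : ∀ x y, H x y = fderiv ℝ (fderiv ℝ fun x ↦ ‖g x xe‖) 0 x y)
    (hsymm : ∀ x y, H x y = H y x) (hnondeg : ∀ x, (∀ y, H x y = 0) → x = 0)
    {K : Type*} [Fintype K] (k₁ : K) (b : OrthonormalBasis K ℝ (ℝ ∙ firstBasis d)ᗮ) :
    ∃ (r : ℕ) (w : Fin r → ℝ) (J : F ≃ₗ[ℝ] (Fin r → (ℝ ∙ firstBasis d)ᗮ)),
      (∀ i, w i = -1 ∨ w i = 1) ∧ ∀ x, H x x = ∑ i, w i * ‖J x i‖ ^ 2 := by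
  classical
  have := hg.finiteDimensional
  have hlift {u : EuclideanSpace ℝ (Fin d)} (hu : u ∈ (ℝ ∙ firstBasis d)ᗮ) :
      ∃ h : Module.End ℝ F,
        (∀ x v, fderiv ℝ g 0 (h x) v = (ℝ ∙ u)ᗮ.reflection (fderiv ℝ g 0 x v)) ∧
        ∀ x, H (h x) (h x) = H x x := by
    obtain ⟨h, hh, hhess⟩ := hg.exists_fderiv_comp_eq_of_linearIsometryEquiv hd
      (ρ := (ℝ ∙ u)ᗮ.reflection) <| (Submodule.reflection_eq_self_iff _).2 <|
        Submodule.mem_orthogonal_singleton_iff_inner_right.2 <|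
          Submodule.mem_orthogonal_singleton_iff_inner_left.1 hu
    exact ⟨h, hh, fun x ↦ (hH _ _).trans ((hhess x).trans (hH x x).symm)⟩
  choose h hh hhH using fun k ↦ hlift (b k).2
  choose τ hτ hτH using fun k ↦ hlift (b k - b k₁).2
  let L : F →ₗ[ℝ] (K → V → ℝ) := LinearMap.pi fun k ↦ LinearMap.pi fun v ↦
    innerₗ _ (b k : EuclideanSpace ℝ (Fin d)) ∘ₗ LinearMap.proj v ∘ₗ (fderiv ℝ g 0).toLinearMap
  have hLapply (x : F) (k : K) (v : V) :
      L x k v = inner ℝ (b k : EuclideanSpace ℝ (Fin d)) (fderiv ℝ g 0 x v) := rfl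
  have hL : Function.Injective L := by
    refine (injective_iff_map_eq_zero L).2 fun x hx ↦
      hg.eq_zero_of_fderiv_apply_mem_span hd hℓ fun v ↦ ?_
    exact mem_span_singleton_of_inner_eq_zero b fun k ↦ congr($hx k v)
  refine exists_linearEquiv_sum_mul_norm_sq_of_coordinates b k₁ hL (h := h) (τ := τ)
    (fun k x j ↦ funext fun v ↦ ?_) (fun k x j ↦ funext fun v ↦ ?_) hsymm hnondeg hhH hτH
  · rw [hLapply, hh, inner_reflection_orthogonal_singleton]
    split_ifs <;> rfl
  · rw [hLapply, hτ, hLapply]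
    exact inner_reflection_orthogonal_singleton_sub b k k₁ j _

theorem exists_linearEquiv_hessian_eq
    (hg : IsMorseChart g (reducedConf d V E ℓ xs xe) fun q ↦ ‖q xe‖) (hd : 2 ≤ d)
    (hℓ : ∀ e ∈ E, 0 < ℓ e) :
    ∃ (r : ℕ) (w : Fin r → ℝ) (J : F ≃ₗ[ℝ] (Fin r → (ℝ ∙ firstBasis d)ᗮ)),
      (∀ i, w i = -1 ∨ w i = 1) ∧
      ∀ x, fderiv ℝ (fderiv ℝ fun x ↦ ‖g x xe‖) 0 x x = ∑ i, w i * ‖J x i‖ ^ 2 := by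
  have := hg.finiteDimensional
  obtain ⟨H, hH⟩ : ∃ H : F →ₗ[ℝ] F →ₗ[ℝ] ℝ,
      ∀ x y, H x y = fderiv ℝ (fderiv ℝ fun x ↦ ‖g x xe‖) 0 x y :=
    ⟨ContinuousLinearMap.toLinearMap₁₂ (fderiv ℝ (fderiv ℝ fun x ↦ ‖g x xe‖) 0), fun _ _ ↦ rfl⟩
  have hsymm (x y : F) : H x y = H y x := by
    simpa only [hH] using hg.contDiff_comp.contDiffAt.isSymmSndFDerivAt (by simp; norm_num) x y
  have hnondeg (x : F) (hx : ∀ y, H x y = 0) : x = 0 :=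
    (injective_iff_map_eq_zero _).1 hg.bijective_hessian.1 x <|
      ContinuousLinearMap.ext fun y ↦ (hH x y).symm.trans (hx y)
  have hfinrank : Module.finrank ℝ (ℝ ∙ firstBasis d)ᗮ = d - 1 := by
    have : Fact (Module.finrank ℝ (EuclideanSpace ℝ (Fin d)) = d - 1 + 1) := ⟨by simp; omega⟩
    exact Submodule.finrank_orthogonal_span_singleton (by simp [firstBasis])
  let b := (stdOrthonormalBasis ℝ (ℝ ∙ firstBasis d)ᗮ).reindex (finCongr hfinrank)
  obtain rfl | hd := hd.eq_or_lt
  · have : Unique (Fin (2 - 1)) := inferInstanceAs (Unique (Fin 1))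
    simpa only [hH] using exists_linearEquiv_sum_mul_norm_sq b (p := 1) (τ := 1) (k₁ := 0)
      (CompleteOrthogonalIdempotents.unique_iff.2 rfl) (by simp) (by simp) hsymm hnondeg
      (fun k l hkl ↦ (hkl (Subsingleton.elim k l)).elim) (by simp)
  · simpa only [hH] using
      hg.exists_linearEquiv_hessian_eq_of_two_lt hd hℓ hH hsymm hnondeg ⟨0, by omega⟩ b

end IsMorseChart

end Linkage

section Hemisphere

variable {F : Type*} [NormedAddCommGroup F] [InnerProductSpace ℝ F] {e : F} {ε : ℝ}

/-- The point over `z ∈ eᗮ`, `‖z‖ ≤ 1`, of the unit hemisphere centred at `ε • e`, where `e` is a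
unit vector and `ε = ±1`. -/
noncomputable def hemisphereLift (e : F) (ε : ℝ) (z : (ℝ ∙ e)ᗮ) : F :=
  (ε * √(1 - ‖z‖ ^ 2)) • e + z

lemma inner_hemisphereLift (he : ‖e‖ = 1) (ε : ℝ) (z : (ℝ ∙ e)ᗮ) :
    inner ℝ e (hemisphereLift e ε z) = ε * √(1 - ‖z‖ ^ 2) := by
  rw [hemisphereLift, inner_add_right, inner_smul_right, real_inner_self_eq_norm_sq, he,
    Submodule.mem_orthogonal_singleton_iff_inner_right.1 z.2]
  ring

lemma orthogonalProjectionOnto_hemisphereLift (e : F) (ε : ℝ) (z : (ℝ ∙ e)ᗮ) :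
    (ℝ ∙ e)ᗮ.orthogonalProjectionOnto (hemisphereLift e ε z) = z := by
  simp [hemisphereLift]

lemma norm_hemisphereLift (he : ‖e‖ = 1) (hε : ε ^ 2 = 1) {z : (ℝ ∙ e)ᗮ} (hz : ‖z‖ ≤ 1) :
    ‖hemisphereLift e ε z‖ = 1 := by
  have horth : inner ℝ ((ε * √(1 - ‖z‖ ^ 2)) • e) (z : F) = 0 := by
    rw [inner_smul_left, Submodule.mem_orthogonal_singleton_iff_inner_right.1 z.2, mul_zero]
  have hsq : ‖hemisphereLift e ε z‖ ^ 2 = 1 := by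
    rw [hemisphereLift, norm_add_sq_real, horth, norm_smul, he, mul_one, Real.norm_eq_abs, sq_abs,
      mul_pow, hε, Real.sq_sqrt (by nlinarith [norm_nonneg z]), Submodule.coe_norm]
    ring
  exact (pow_eq_one_iff_of_nonneg (norm_nonneg _) two_ne_zero).1 hsq

lemma hemisphereLift_orthogonalProjectionOnto (he : ‖e‖ = 1) (hε : ε ^ 2 = 1) {u : F} (hu : ‖u‖ = 1)
    (hpos : 0 < ε * inner ℝ e u) :
    hemisphereLift e ε ((ℝ ∙ e)ᗮ.orthogonalProjectionOnto u) = u := by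
  have hdecomp : inner ℝ e u • e + ((ℝ ∙ e)ᗮ.orthogonalProjectionOnto u : F) = u := by
    rw [← Submodule.starProjection_unit_singleton ℝ he]
    exact (ℝ ∙ e).starProjection_add_starProjection_orthogonal u
  have hsq : 1 - ‖(ℝ ∙ e)ᗮ.orthogonalProjectionOnto u‖ ^ 2 = (ε * inner ℝ e u) ^ 2 := by
    have hu2 := Submodule.norm_sq_eq_add_norm_sq_starProjection u (ℝ ∙ e)
    rw [Submodule.starProjection_unit_singleton ℝ he, norm_smul, he, hu, mul_one,
      Real.norm_eq_abs, sq_abs, Submodule.starProjection_apply, Submodule.norm_coe] at hu2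
    rw [mul_pow, hε]
    linarith
  rw [hemisphereLift, hsq, Real.sqrt_sq hpos.le, ← mul_assoc, ← sq, hε, one_mul, hdecomp]

end Hemisphere

section Chain

variable {r : ℕ}

section CloseUp

variable {P : Type*} [NormedAddCommGroup P] [InnerProductSpace ℝ P]

/-- Prepends to `v` the vector that makes the `lam`-weighted sum vanish. -/
noncomputable def closeUp (lam : Fin (r + 1) → ℝ) : (Fin r → P) →L[ℝ] (Fin (r + 1) → P) :=
  ContinuousLinearMap.pi <| Fin.cons
    (-(lam 0)⁻¹ • ∑ i : Fin r, lam i.succ • ContinuousLinearMap.proj i) ContinuousLinearMap.proj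

lemma closeUp_apply (lam : Fin (r + 1) → ℝ) (v : Fin r → P) :
    closeUp lam v = Fin.cons (-(lam 0)⁻¹ • ∑ i : Fin r, lam i.succ • v i) v := by
  ext1 j
  cases j using Fin.cases <;> simp [closeUp]

lemma sum_smul_closeUp {lam : Fin (r + 1) → ℝ} (h0 : lam 0 ≠ 0) (v : Fin r → P) :
    ∑ j, lam j • closeUp lam v j = 0 := by
  simp [closeUp_apply, Fin.sum_univ_succ, h0]

lemma closeUp_tail {lam : Fin (r + 1) → ℝ} (h0 : lam 0 ≠ 0) {z : Fin (r + 1) → P}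
    (hz : ∑ j, lam j • z j = 0) : closeUp lam (Fin.tail z) = z := by
  rw [Fin.sum_univ_succ, add_eq_zero_iff_neg_eq] at hz
  rw [closeUp_apply, neg_smul, ← smul_neg]
  simp only [Fin.tail, ← hz, neg_neg, inv_smul_smul₀ h0]
  exact Fin.cons_self_tail z

/-- The height of the end of the open chain with lengths `lam` whose `j`-th link is the lift of
`closeUp lam v j` to the hemisphere of sign `ε j`. -/
noncomputable def chainHeight (lam ε : Fin (r + 1) → ℝ) (v : Fin r → P) : ℝ :=
  ∑ j, lam j * ε j * √(1 - ‖closeUp lam v j‖ ^ 2)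

/-- The parameters at which `closeUp` can be lifted to the open hemispheres and the end of the
chain has positive height. -/
def chainDomain (P : Type*) [NormedAddCommGroup P] [InnerProductSpace ℝ P]
    (lam ε : Fin (r + 1) → ℝ) : Set (Fin r → P) :=
  {v | (∀ j, ‖closeUp lam v j‖ < 1) ∧ 0 < chainHeight lam ε v}

lemma isOpen_chainDomain (lam ε : Fin (r + 1) → ℝ) : IsOpen (chainDomain P lam ε) := by
  refine IsOpen.and ?_ (isOpen_lt continuous_const ?_)
  · simp only [Set.ofPred_forall]
    exact isOpen_iInter_of_finite fun j ↦ isOpen_lt (by fun_prop) continuous_const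
  · unfold chainHeight
    fun_prop

lemma chainHeight_zero (lam ε : Fin (r + 1) → ℝ) :
    chainHeight lam ε (0 : Fin r → P) = ∑ j, lam j * ε j := by
  simp [chainHeight]

end CloseUp

section SecondOrder

variable {E P : Type*} [NormedAddCommGroup E] [NormedSpace ℝ E] [NormedAddCommGroup P]
  [InnerProductSpace ℝ P]

lemma isHadamardForm_sqrt_one_sub_norm_sq (R : E →L[ℝ] P) :
    IsHadamardForm (fun v ↦ √(1 - ‖R v‖ ^ 2))
      (fun v ↦ (-2 / (1 + √(1 - ‖R v‖ ^ 2))) • (innerSL ℝ).bilinearComp R R) where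
  symm x y z := by simp [real_inner_comm]
  exists_hasStrictFDerivAt := by
    have hsqrt : ContDiffAt ℝ 1 (fun v ↦ √(1 - ‖R v‖ ^ 2)) 0 :=
      (contDiffAt_const.sub (R.contDiff.contDiffAt.norm_sq ℝ)).sqrt (by simp)
    have hB : ContDiffAt ℝ 1 (fun v ↦ (-2 / (1 + √(1 - ‖R v‖ ^ 2))) •
        (innerSL ℝ).bilinearComp R R) 0 :=
      (contDiffAt_const.div (contDiffAt_const.add hsqrt) (by simp)).smul contDiffAt_const
    exact ⟨_, hB.hasStrictFDerivAt (by norm_num)⟩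
  eventually_eq := by
    have hlt : ∀ᶠ v in 𝓝 (0 : E), ‖R v‖ < 1 :=
      (Continuous.tendsto' (by fun_prop) _ _ (by simp)).eventually_lt_const one_pos
    filter_upwards [hlt] with v hv
    have hsq := Real.sq_sqrt (show 0 ≤ 1 - ‖R v‖ ^ 2 by nlinarith [norm_nonneg (R v)])
    have hne : 1 + √(1 - ‖R v‖ ^ 2) ≠ 0 := by positivity
    simp only [map_zero, norm_zero, ne_eq, OfNat.ofNat_ne_zero, not_false_eq_true, zero_pow,
      sub_zero, Real.sqrt_one, smul_apply, ContinuousLinearMap.bilinearComp_apply,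
      innerSL_apply_apply, real_inner_self_eq_norm_sq, smul_eq_mul]
    field_simp
    linarith

theorem exists_isHadamardForm_chainHeight (lam ε : Fin (r + 1) → ℝ) :
    ∃ B, IsHadamardForm (chainHeight (P := P) lam ε) B ∧
      ∀ v, B 0 v v = -∑ j, lam j * ε j * ‖closeUp lam v j‖ ^ 2 := by
  have hlink (j : Fin (r + 1)) := (isHadamardForm_sqrt_one_sub_norm_sq
    ((ContinuousLinearMap.proj j : (Fin (r + 1) → P) →L[ℝ] P) ∘L closeUp lam)).const_mul
      (lam j * ε j)
  refine ⟨_, .sum hlink, fun v ↦ ?_⟩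
  rw [← Finset.sum_neg_distrib]
  simp only [_root_.sum_apply]
  refine Finset.sum_congr rfl fun j _ ↦ ?_
  simp only [ContinuousLinearMap.comp_apply, map_zero, ContinuousLinearMap.proj_apply,
    norm_zero, ne_eq, OfNat.ofNat_ne_zero, not_false_eq_true, zero_pow, sub_zero,
    Real.sqrt_one, smul_apply, ContinuousLinearMap.bilinearComp_apply, innerSL_apply_apply,
    real_inner_self_eq_norm_sq, smul_eq_mul]
  ring

end SecondOrder

section Matching

variable {P : Type*} [NormedAddCommGroup P] [InnerProductSpace ℝ P]

lemma neg_sum_mul_norm_closeUp_sq_cons {l : ℝ} (hl : l ≠ 0) (c : ℝ) (w : Fin r → ℝ)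
    (v : Fin r → P) :
    -∑ j, (Fin.cons l fun _ ↦ c : Fin (r + 1) → ℝ) j * (Fin.cons 1 (-w) : Fin (r + 1) → ℝ) j *
      ‖closeUp (Fin.cons l fun _ ↦ c) v j‖ ^ 2 =
    ∑ i, c * w i * ‖v i‖ ^ 2 - l⁻¹ * ‖∑ i, c • v i‖ ^ 2 := by
  simp only [closeUp_apply, Fin.cons_zero, Fin.cons_succ, neg_smul, Fin.sum_univ_succ, mul_one,
    norm_neg, norm_smul, norm_inv, Real.norm_eq_abs, mul_pow, inv_pow, sq_abs, Pi.neg_apply,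
    mul_neg, neg_mul, Finset.sum_neg_distrib, neg_add_rev, neg_neg]
  field_simp
  ring

theorem exists_chain_of_sum_mul_norm_sq {w : Fin r → ℝ} (hw : ∀ i, w i = -1 ∨ w i = 1) {a : ℝ}
    (ha : 0 < a) :
    ∃ (lam ε : Fin (r + 1) → ℝ) (J : (Fin r → P) ≃ₗ[ℝ] (Fin r → P)), (∀ j, 0 < lam j) ∧
      (∀ j, ε j = 1 ∨ ε j = -1) ∧ ∑ j, lam j * ε j = a ∧
      ∀ v, -∑ j, lam j * ε j * ‖closeUp lam (J v) j‖ ^ 2 = ∑ i, w i * ‖v i‖ ^ 2 := by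
  have hw0 (i : Fin r) : w i ≠ 0 := by obtain h | h := hw i <;> norm_num [h]
  have hinv (i : Fin r) : (w i)⁻¹ = w i := by obtain h | h := hw i <;> norm_num [h]
  obtain ⟨c, hc, hca⟩ : ∃ c, 0 < c ∧ c * r < a :=
    ⟨a / (r + 1), by positivity, by rw [div_mul_eq_mul_div, div_lt_iff₀ (by positivity)]; linarith⟩
  obtain ⟨l, hl⟩ : ∃ l, l = a + c * ∑ i, w i := ⟨_, rfl⟩
  have hl0 : 0 < l := by
    have hsum : -(r : ℝ) ≤ ∑ i, w i := by
      simpa using Finset.sum_le_sum fun i (_ : i ∈ Finset.univ) ↦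
        (show -1 ≤ w i by obtain h | h := hw i <;> norm_num [h])
    nlinarith
  obtain ⟨K, hK⟩ := exists_linearEquiv_sum_mul_norm_sq_sub (P := P) (m := fun i ↦ c * w i)
    (n := fun _ ↦ c) (κ := l⁻¹) (fun i ↦ mul_ne_zero hc.ne' (hw0 i)) <| by
      have hcw (i : Fin r) : c ^ 2 / (c * w i) = c * w i := by
        rw [div_mul_eq_div_div, div_eq_mul_inv, hinv, sq, mul_div_cancel_right₀ _ hc.ne']
      simp only [hcw, ← Finset.mul_sum]
      rw [show 1 - l⁻¹ * (c * ∑ i, w i) = a / l by field_simp; linarith]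
      positivity
  refine ⟨Fin.cons l fun _ ↦ c, Fin.cons 1 (-w),
    (LinearEquiv.smulOfNeZero ℝ _ (√c)⁻¹ (by positivity)).trans K.symm,
    Fin.forall_fin_succ.2 ⟨hl0, fun _ ↦ hc⟩, Fin.forall_fin_succ.2 ⟨.inl rfl, fun i ↦ ?_⟩, ?_,
    fun v ↦ ?_⟩
  · obtain h | h := hw i <;> simp [h]
  · simp [Fin.sum_univ_succ, hl, Finset.mul_sum]
  · rw [neg_sum_mul_norm_closeUp_sq_cons hl0.ne', ← hK]
    refine Finset.sum_congr rfl fun i _ ↦ ?_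
    simp only [LinearEquiv.trans_apply, LinearEquiv.smulOfNeZero_apply, map_smul,
      LinearEquiv.apply_symm_apply, Pi.smul_apply, norm_smul, norm_inv, Real.norm_eq_abs, mul_pow,
      inv_pow, sq_abs, hc.le, Real.sq_sqrt]
    field_simp

end Matching

section Configuration

variable {d : ℕ} [NeZero d]

/-- The configuration of the open chain with lengths `lam` over the parameter `v`. -/
noncomputable def chainConf (lam ε : Fin (r + 1) → ℝ) (v : Fin r → (ℝ ∙ firstBasis d)ᗮ)
    (j : Fin (r + 1)) : EuclideanSpace ℝ (Fin d) :=
  hemisphereLift (firstBasis d) (ε j) (closeUp lam v j)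

lemma sum_smul_chainConf {lam : Fin (r + 1) → ℝ} (h0 : lam 0 ≠ 0) (ε : Fin (r + 1) → ℝ)
    (v : Fin r → (ℝ ∙ firstBasis d)ᗮ) :
    ∑ j, lam j • chainConf lam ε v j = chainHeight lam ε v • firstBasis d := by
  have hclosed := congr(($(sum_smul_closeUp h0 v) : EuclideanSpace ℝ (Fin d)))
  simp only [Submodule.coe_sum, Submodule.coe_smul, Submodule.coe_zero] at hclosed
  simp only [chainConf, hemisphereLift, smul_add, Finset.sum_add_distrib, hclosed, add_zero,
    smul_smul, ← Finset.sum_smul, chainHeight, mul_assoc]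

lemma continuous_chainConf (lam ε : Fin (r + 1) → ℝ) :
    Continuous (chainConf (d := d) lam ε) := by
  unfold chainConf hemisphereLift
  fun_prop

lemma chainConf_zero (lam ε : Fin (r + 1) → ℝ) (j : Fin (r + 1)) :
    chainConf lam ε (0 : Fin r → (ℝ ∙ firstBasis d)ᗮ) j = ε j • firstBasis d := by
  simp [chainConf, hemisphereLift]

theorem isOpenParametrization_chainConf {lam ε : Fin (r + 1) → ℝ} (h0 : lam 0 ≠ 0)
    (hε : ∀ j, ε j ^ 2 = 1) :
    IsOpenParametrization ((chainDomain _ lam ε).domRestrict (chainConf lam ε))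
      (chainReducedConf d (r + 1) lam) := by
  set pr : (Fin (r + 1) → EuclideanSpace ℝ (Fin d)) → Fin r → (ℝ ∙ firstBasis d)ᗮ :=
    fun u ↦ Fin.tail fun j ↦ (ℝ ∙ firstBasis d)ᗮ.orthogonalProjectionOnto (u j)
  have hprc : Continuous pr := by unfold pr Fin.tail; fun_prop
  have hleft (v : Fin r → (ℝ ∙ firstBasis d)ᗮ) : pr (chainConf lam ε v) = v := by
    simp [pr, chainConf, orthogonalProjectionOnto_hemisphereLift, closeUp_apply]
  refine ⟨.of_comp ((continuous_chainConf lam ε).comp continuous_subtype_val) hprc ?_,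
    {u | ∀ j, 0 < ε j * inner ℝ (firstBasis d) (u j)} ∩ pr ⁻¹' chainDomain _ lam ε, ?_, ?_⟩
  · convert IsEmbedding.subtypeVal using 1
    exact funext fun v ↦ hleft v
  · refine IsOpen.inter ?_ ((isOpen_chainDomain lam ε).preimage hprc)
    simp only [Set.ofPred_forall]
    exact isOpen_iInter_of_finite fun j ↦ isOpen_lt continuous_const (by fun_prop)
  · ext u
    constructor
    · rintro ⟨⟨v, hv⟩, rfl⟩
      refine ⟨⟨fun j ↦ ?_, ?_⟩, fun j ↦ ?_, _, hv.2, sum_smul_chainConf h0 ε v⟩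
      · rw [Set.domRestrict_apply, chainConf, inner_hemisphereLift norm_firstBasis, ← mul_assoc,
          ← sq, hε, one_mul, Real.sqrt_pos]
        nlinarith [hv.1 j, norm_nonneg (closeUp lam v j)]
      · simpa only [Set.mem_preimage, Set.domRestrict_apply, hleft] using hv
      · exact norm_hemisphereLift norm_firstBasis (hε j) (hv.1 j).le
    · rintro ⟨⟨hpos, hdom⟩, hu, t, -, hsum⟩
      refine ⟨⟨pr u, hdom⟩, funext fun j ↦ ?_⟩
      have hclosed : closeUp lam (pr u) =
          fun j ↦ (ℝ ∙ firstBasis d)ᗮ.orthogonalProjectionOnto (u j) := by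
        refine closeUp_tail h0 ?_
        simpa [Submodule.orthogonalProjectionOnto_orthogonal_apply_eq_zero] using
          congr((ℝ ∙ firstBasis d)ᗮ.orthogonalProjectionOnto $hsum)
      simp only [Set.domRestrict_apply, chainConf, hclosed]
      exact hemisphereLift_orthogonalProjectionOnto norm_firstBasis (hε j) (hu j) (hpos j)

end Configuration

end Chain

section SEquivalence

/-- S-equivalence of the point `x` of `C` with the point `x'` of `C'`, relative to the functions `ψ`
and `ψ'`: these have neighbourhoods that are homeomorphic to `U × ℝ^s` and `U' × ℝ^s'` in such a way
that `ψ` and `ψ'` descend to `U` and `U'` and correspond under a homeomorphism `f` from `U` to `U'`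
matching the two base points. -/
def SEquivalent {X X' : Type} [TopologicalSpace X] [TopologicalSpace X'] (C : Set X) (ψ : X → ℝ)
    (x : X) (C' : Set X') (ψ' : X' → ℝ) (x' : X') : Prop :=
  ∃ (s s' : ℕ) (W : Set X) (W' : Set X'),
    W ⊆ C ∧ (∃ O, IsOpen O ∧ W = O ∩ C) ∧ W' ⊆ C' ∧ (∃ O', IsOpen O' ∧ W' = O' ∩ C') ∧
    ∃ (hx : x ∈ W) (hx' : x' ∈ W') (U U' : Type) (_ : TopologicalSpace U)
      (_ : TopologicalSpace U') (α : ↥W ≃ₜ U × EuclideanSpace ℝ (Fin s))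
      (β : ↥W' ≃ₜ U' × EuclideanSpace ℝ (Fin s')) (f : U ≃ₜ U') (ψU : U → ℝ) (ψU' : U' → ℝ),
      (∀ w : ↥W, ψ w = ψU (α w).1) ∧ (∀ w' : ↥W', ψ' w' = ψU' (β w').1) ∧
      (∀ u, ψU' (f u) = ψU u) ∧ (α ⟨x, hx⟩).2 = 0 ∧ (β ⟨x', hx'⟩).2 = 0 ∧
      f (α ⟨x, hx⟩).1 = (β ⟨x', hx'⟩).1 ∧ ∀ w : ↥W, ψ w = ψ' (β.symm (f (α w).1, 0))

variable {X X' : Type} [TopologicalSpace X] [TopologicalSpace X'] {C : Set X} {ψ : X → ℝ}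
  {C' : Set X'} {ψ' : X' → ℝ}

theorem IsOpenParametrization.sEquivalent {Y : Type} [TopologicalSpace Y] {g : Y → X} {k : Y → X'}
    (hg : IsOpenParametrization g C) (hk : IsOpenParametrization k C')
    (hψ : ∀ y, ψ (g y) = ψ' (k y)) (y : Y) : SEquivalent C ψ (g y) C' ψ' (k y) := by
  let pad : Y ≃ₜ Y × EuclideanSpace ℝ (Fin 0) :=
    { (Equiv.prodUnique Y _).symm with
      continuous_toFun := continuous_id.prodMk continuous_const
      continuous_invFun := continuous_fst }
  let α := hg.isEmbedding.toHomeomorph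
  let β := hk.isEmbedding.toHomeomorph
  have hα (z : Y) : α.symm ⟨g z, z, rfl⟩ = z := α.symm_apply_apply z
  have hβ (z : Y) : β.symm ⟨k z, z, rfl⟩ = z := β.symm_apply_apply z
  refine ⟨0, 0, Set.range g, Set.range k, Set.range_subset_iff.2 hg.mem, hg.exists_isOpen,
    Set.range_subset_iff.2 hk.mem, hk.exists_isOpen, ⟨y, rfl⟩, ⟨y, rfl⟩, Y, Y, inferInstance,
    inferInstance, α.symm.trans pad, β.symm.trans pad, .refl Y, ψ ∘ g, ψ ∘ g, ?_, ?_,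
    fun _ ↦ rfl, Subsingleton.elim _ _, Subsingleton.elim _ _, ?_, ?_⟩
  · rintro ⟨_, z, rfl⟩
    exact congr(ψ (g $(hα z))).symm
  · rintro ⟨_, z, rfl⟩
    exact (hψ z).symm.trans congr(ψ (g $(hβ z))).symm
  · exact (hα y).trans (hβ y).symm
  · rintro ⟨_, z, rfl⟩
    exact (hψ z).trans congr(ψ' (k $(hα z))).symm

theorem IsOpenParametrization.sEquivalent_of_openPartialHomeomorph {Y Z : Type}
    [TopologicalSpace Y] [TopologicalSpace Z] {g : Y → X} {D : Set Z} {k : Z → X'}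
    (hg : IsOpenParametrization g C) (hD : IsOpen D)
    (hk : IsOpenParametrization (D.domRestrict k) C') (Ψ : OpenPartialHomeomorph Y Z)
    (hψ : ∀ y ∈ Ψ.source, Ψ y ∈ D → ψ (g y) = ψ' (k (Ψ y))) {y : Y} (hy : y ∈ Ψ.source)
    (hyD : Ψ y ∈ D) : SEquivalent C ψ (g y) C' ψ' (k (Ψ y)) := by
  let Θ := Ψ.restrOpen _ (Ψ.isOpen_inter_preimage hD)
  let j : Θ.source → D := fun x ↦ ⟨Θ x, x.2.2.2⟩
  have hj : IsOpenEmbedding j :=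
    .of_comp _ hD.isOpenEmbedding_subtypeVal Θ.isOpenEmbedding_restrict
  exact (hg.comp_isOpenEmbedding Θ.open_source.isOpenEmbedding_subtypeVal).sEquivalent
    (hk.comp_isOpenEmbedding hj) (fun x ↦ hψ x x.2.1 x.2.2.2) ⟨y, hy, hy, hyD⟩

end SEquivalence

theorem IsMorseChart.sEquivalent_chainReducedConf {F X : Type} [NormedAddCommGroup F]
    [NormedSpace ℝ F] [NormedAddCommGroup X] [NormedSpace ℝ X] {g : F → X} {C : Set X} {ψ : X → ℝ}
    (hg : IsMorseChart g C ψ) (hpos : 0 < ψ (g 0)) {d r : ℕ} [NeZero d]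
    {lam ε : Fin (r + 1) → ℝ} (h0 : lam 0 ≠ 0) (hε : ∀ j, ε j = 1 ∨ ε j = -1)
    (hsum : ∑ j, lam j * ε j = ψ (g 0)) (J : F ≃L[ℝ] (Fin r → (ℝ ∙ firstBasis d)ᗮ))
    (hJ : ∀ x, fderiv ℝ (fderiv ℝ fun x ↦ ψ (g x)) 0 x x =
      -∑ j, lam j * ε j * ‖closeUp lam (J x) j‖ ^ 2) :
    SEquivalent C ψ (g 0) (chainReducedConf d (r + 1) lam) (fun u ↦ ‖∑ i, lam i • u i‖)
      (chainConf lam ε 0) := by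
  have : FiniteDimensional ℝ F := J.symm.toLinearEquiv.finiteDimensional
  have : CompleteSpace F := FiniteDimensional.complete ℝ F
  have hheight : chainHeight lam ε (0 : Fin r → (ℝ ∙ firstBasis d)ᗮ) = ψ (g 0) :=
    (chainHeight_zero lam ε).trans hsum
  have hdom : (0 : Fin r → (ℝ ∙ firstBasis d)ᗮ) ∈ chainDomain _ lam ε :=
    ⟨by simp, hheight ▸ hpos⟩
  obtain ⟨B₁, hB₁, hB₁0⟩ :=
    exists_isHadamardForm_of_contDiff hg.contDiff_comp hg.fderiv_comp_eq_zero
  obtain ⟨B₂, hB₂, hB₂0⟩ := exists_isHadamardForm_chainHeight (P := (ℝ ∙ firstBasis d)ᗮ) lam ε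
  obtain ⟨Ψ, hΨ, hΨ0, hΨeq⟩ := hB₁.exists_openPartialHomeomorph_comp_eq hB₂ hheight.symm
    (hB₁0 ▸ hg.bijective_hessian) J fun x ↦ by rw [hB₁0, hJ, hB₂0]
  rw [← hΨ0]
  refine hg.sEquivalent_of_openPartialHomeomorph (isOpen_chainDomain lam ε)
    (isOpenParametrization_chainConf h0 fun j ↦ sq_eq_one_iff.2 (hε j)) Ψ
    (fun x hx hxD ↦ ?_) hΨ (hΨ0.symm ▸ hdom)
  rw [sum_smul_chainConf h0, norm_smul, norm_firstBasis, mul_one, Real.norm_of_nonneg hxD.2.le,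
    hΨeq x hx]

theorem stmt_9_general {d : ℕ} [NeZero d] (hd : 2 ≤ d) {V : Type} [Fintype V] {E : Set (V × V)}
    {ℓ : V × V → ℝ} (hℓ : ∀ e ∈ E, 0 < ℓ e) {xs xe : V} {F : Type} [NormedAddCommGroup F]
    [NormedSpace ℝ F] {g : F → V → EuclideanSpace ℝ (Fin d)}
    (hg : IsMorseChart g (reducedConf d V E ℓ xs xe) fun q ↦ ‖q xe‖) :
    ∃ n, 1 ≤ n ∧ ∃ lam : Fin n → ℝ, (∀ i, 0 < lam i) ∧
      ∃ u0 : Fin n → EuclideanSpace ℝ (Fin d), (∀ i, ‖u0 i‖ = 1) ∧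
        (∃ w : EuclideanSpace ℝ (Fin d), ‖w‖ = 1 ∧ ∀ i, u0 i = w ∨ u0 i = -w) ∧
        ∑ i, lam i • u0 i = ‖g 0 xe‖ • firstBasis d ∧
        SEquivalent (reducedConf d V E ℓ xs xe) (fun q ↦ ‖q xe‖) (g 0)
          (chainReducedConf d n lam) (fun u ↦ ‖∑ i, lam i • u i‖) u0 := by
  have : FiniteDimensional ℝ F := hg.finiteDimensional
  obtain ⟨r, w, J, hw, hJ⟩ := hg.exists_linearEquiv_hessian_eq hd hℓ
  have hpos : 0 < ‖g 0 xe‖ := by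
    obtain ⟨-, t, ht, hgt⟩ := hg.mem 0
    rw [hgt, norm_smul, norm_firstBasis, mul_one]
    exact norm_pos_iff.2 ht.ne'
  obtain ⟨lam, ε, K, hlam, hε, hsum, hK⟩ :=
    exists_chain_of_sum_mul_norm_sq (P := (ℝ ∙ firstBasis d)ᗮ) hw hpos
  refine ⟨r + 1, by omega, lam, hlam, chainConf lam ε 0, fun j ↦ ?_,
    ⟨firstBasis d, norm_firstBasis, fun j ↦ ?_⟩, ?_,
    hg.sEquivalent_chainReducedConf hpos (hlam 0).ne' hε hsum (J.trans K).toContinuousLinearEquiv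
      fun x ↦ (hJ x).trans (hK (J x)).symm⟩
  · obtain h | h := hε j <;> simp [chainConf_zero, h, norm_firstBasis]
  · obtain h | h := hε j <;> simp [chainConf_zero, h]
  · rw [sum_smul_chainConf (hlam 0).ne', chainHeight_zero, hsum]

end

theorem stmt_9 (d : ℕ) (hd : 2 ≤ d) [NeZero d]
    (V : Type) [Fintype V] (E : Set (V × V)) (ℓ : V × V → ℝ)
    (hℓ : ∀ e ∈ E, 0 < ℓ e) (xs xe : V) (hne : xe ≠ xs)
    (Vc : V → EuclideanSpace ℝ (Fin d))
    (hVc : Vc ∈ reducedConf d V E ℓ xs xe)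
    (a₀ : ℝ) (ha₀ : 0 < a₀) (ha : ‖Vc xe‖ = a₀)
    (N : ℕ) (hN : 1 ≤ N)
    (g : EuclideanSpace ℝ (Fin N) → (V → EuclideanSpace ℝ (Fin d)))
    (hg0 : g 0 = Vc)
    (hgsmooth : ContDiff ℝ (⊤ : ℕ∞) g)
    (hgemb : Topology.IsEmbedding g)
    (hgrange : ∃ O : Set (V → EuclideanSpace ℝ (Fin d)), IsOpen O ∧
      Set.range g = O ∩ reducedConf d V E ℓ xs xe)
    (hgderiv : ∀ x, Function.Injective (fderiv ℝ g x))
    (hcrit : fderiv ℝ (fun x => ‖g x xe‖) 0 = 0)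
    (hhess : Function.Bijective (fderiv ℝ (fderiv ℝ (fun x => ‖g x xe‖)) 0)) :
    ∃ (n : ℕ), 1 ≤ n ∧
    ∃ (lam : Fin n → ℝ), (∀ i, 0 < lam i) ∧
    ∃ (u0 : Fin n → EuclideanSpace ℝ (Fin d)),
      (∀ i, ‖u0 i‖ = 1) ∧
      (∃ w : EuclideanSpace ℝ (Fin d), ‖w‖ = 1 ∧ ∀ i, u0 i = w ∨ u0 i = -w) ∧
      (∑ i, lam i • u0 i) = a₀ • firstBasis d ∧
    ∃ (s s' : ℕ)
      (W : Set (V → EuclideanSpace ℝ (Fin d)))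
      (W' : Set (Fin n → EuclideanSpace ℝ (Fin d))),
      W ⊆ reducedConf d V E ℓ xs xe ∧
      (∃ O, IsOpen O ∧ W = O ∩ reducedConf d V E ℓ xs xe) ∧
      W' ⊆ chainReducedConf d n lam ∧
      (∃ O', IsOpen O' ∧ W' = O' ∩ chainReducedConf d n lam) ∧
    ∃ (hVcW : Vc ∈ W) (hu0W' : u0 ∈ W')
      (U U' : Type) (_tU : TopologicalSpace U) (_tU' : TopologicalSpace U')
      (α : ↥W ≃ₜ U × EuclideanSpace ℝ (Fin s))
      (β : ↥W' ≃ₜ U' × EuclideanSpace ℝ (Fin s'))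
      (f : U ≃ₜ U')
      (ψU : U → ℝ) (ηU : U' → ℝ),
      (∀ w : ↥W, ‖(w : V → EuclideanSpace ℝ (Fin d)) xe‖ = ψU (α w).1) ∧
      (∀ w' : ↥W', ‖∑ i, lam i • (w' : Fin n → EuclideanSpace ℝ (Fin d)) i‖ =
        ηU (β w').1) ∧
      (∀ uu : U, ηU (f uu) = ψU uu) ∧
      (α ⟨Vc, hVcW⟩).2 = 0 ∧ (β ⟨u0, hu0W'⟩).2 = 0 ∧
      f (α ⟨Vc, hVcW⟩).1 = (β ⟨u0, hu0W'⟩).1 ∧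
      (∀ w : ↥W, ‖(w : V → EuclideanSpace ℝ (Fin d)) xe‖ =
        ‖∑ i, lam i •
          ((β.symm (f (α w).1, 0) : ↥W') : Fin n → EuclideanSpace ℝ (Fin d)) i‖) := by
  subst hg0 ha
  have h3 : (3 : WithTop ℕ∞) ≤ (⊤ : ℕ∞) := WithTop.coe_le_coe.2 (le_top : (3 : ℕ∞) ≤ ⊤)
  have hgpar : IsOpenParametrization g (reducedConf d V E ℓ xs xe) := ⟨hgemb, hgrange⟩
  exact stmt_9_general hd hℓ
    { hgpar with
      contDiff := hgsmooth.of_le h3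
      injective_fderiv := hgderiv 0
      contDiff_comp := (contDiff_norm_apply_of_mem_reducedConf hgsmooth hgpar.mem).of_le h3
      fderiv_comp_eq_zero := hcrit
      bijective_hessian := hhess }
end

section
/- Let d ≥ 2, let X be a topological space, a ∈ X, and Ψ : X → EuclideanSpace ℝ (Fin d) a continuous map. Let φ be the work map of an open k-chain with lengths λ i > 0, and let u⁰ ∈ (S^{d-1})^k be a non-aligned tuple with φ(u⁰) = Ψ(a). Then in the fiber product Z = {(x, u) ∈ X × (S^{d-1})^k : Ψ(x) = φ(u)} the point (a, u⁰) has an open neighborhood homeomorphic to A × ℝ^{k(d−1)−d} for some open neighborhood A of a in X, by a homeomorphism sending (a, u⁰) to (a, 0). -/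
open scoped BigOperators

/-!
The tuples of unit vectors with `φ(u) = y` are the fiber over `(1, y)` of the constraint map
`u ↦ ((‖u i‖²)ᵢ, φ(u))` on the ambient vector space. Its derivative is onto as soon as two of the
`u i` with nonzero weight are not parallel: radial directions adjust the norms, and the tangent
hyperplanes of the sphere at two non-parallel vectors together span the space, so tangential
directions adjust `φ(u)`. By the implicit function theorem the constraint map is then a product
projection in a suitable chart, and the pullback of a product along `Ψ` is a product.
-/

open Metric Module Set Topology

section LocalProduct

variable {X U W N : Type*} [TopologicalSpace X] [TopologicalSpace U] [TopologicalSpace W]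

/-- Local triviality, with fiber `N`, of a subset of `X × U` over `X` at the point `(a, u)`: some
relatively open neighborhood of `(a, u)` in `Z` is homeomorphic to the product of an open
neighborhood of `a` with `N`, and `(a, u)` corresponds to `(a, 0)`. -/
def IsLocallyProductAt [TopologicalSpace N] [Zero N] (Z : Set (X × U)) (a : X) (u : U) : Prop :=
  ∃ A : Set X, IsOpen A ∧
    ∃ (hA : a ∈ A) (Nb : Set (X × U)), Nb ⊆ Z ∧ (∃ O, IsOpen O ∧ Nb = O ∩ Z) ∧
      ∃ (hmem : (a, u) ∈ Nb) (h : ↥Nb ≃ₜ ↥A × N), h ⟨(a, u), hmem⟩ = (⟨a, hA⟩, 0)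

/-- The pullback along `P : X → W` of the first coordinate of a chart `G` whose target is the full
cylinder `V ×ˢ univ` is globally the product of `P ⁻¹' V` with the second factor. -/
def pullbackHomeomorphOfTargetEq [TopologicalSpace N] (G : OpenPartialHomeomorph U (W × N))
    {V : Set W} (hG : G.target = V ×ˢ univ) {P : X → W} (hP : Continuous P) :
    {p : X × U | p.2 ∈ G.source ∧ P p.1 = (G p.2).1} ≃ₜ (P ⁻¹' V) × N where
  toFun p := (⟨p.1.1, by
    have h : G p.1.2 ∈ V ×ˢ univ := hG ▸ G.map_source p.2.1
    simpa only [mem_preimage, p.2.2] using h.1⟩, (G p.1.2).2)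
  invFun q :=
    have hq : (P q.1, q.2) ∈ G.target := hG ▸ ⟨q.1.2, mem_univ _⟩
    ⟨(q.1, G.symm (P q.1, q.2)), G.map_target hq, by simp only [G.right_inv hq]⟩
  left_inv := by
    rintro ⟨⟨x, u⟩, hu, hx⟩
    have hGu : (P x, (G u).2) = G u := Prod.ext hx rfl
    simp only [hGu, G.left_inv hu]
  right_inv := by
    rintro ⟨⟨x, hx⟩, n⟩
    have hxn : (P x, n) ∈ G.target := hG ▸ ⟨hx, mem_univ _⟩
    simp only [G.right_inv hxn]
  continuous_toFun := by
    have hG' : Continuous fun p : {p : X × U | p.2 ∈ G.source ∧ P p.1 = (G p.2).1} => G p.1.2 :=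
      G.continuousOn.comp_continuous (by fun_prop) fun p => p.2.1
    exact .prodMk (by fun_prop) (continuous_snd.comp hG')
  continuous_invFun := by
    refine Continuous.subtype_mk (.prodMk (by fun_prop) ?_) _
    exact G.symm.continuousOn.comp_continuous (by fun_prop) fun q =>
      hG.symm.subset ⟨q.1.2, mem_univ _⟩

theorem exists_openPartialHomeomorph_target_eq_prod_univ [NormedAddCommGroup N] [NormedSpace ℝ N]
    (G : OpenPartialHomeomorph U (W × N)) {u : U} (hu : u ∈ G.source) :
    ∃ (G' : OpenPartialHomeomorph U (W × N)) (V : Set W), IsOpen V ∧ u ∈ G'.source ∧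
      G'.target = V ×ˢ univ ∧ (∀ v, (G' v).1 = (G v).1) ∧ (G' u).2 = 0 := by
  obtain ⟨V, B, hV, huV, hB, huB, hVB⟩ :=
    mem_nhds_prod_iff'.1 (G.open_target.mem_nhds (G.map_source hu))
  obtain ⟨r, hr, hrB⟩ := Metric.isOpen_iff.1 hB _ huB
  let b := OpenPartialHomeomorph.univBall (G u).2 r
  have hb : b.target = ball (G u).2 r := OpenPartialHomeomorph.univBall_target _ hr
  have hb' : b.source = univ := OpenPartialHomeomorph.univBall_source _ _
  let H := (OpenPartialHomeomorph.ofSet V hV).prod b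
  have hH : H.target ⊆ G.target := fun p hp => hVB ⟨hp.1, hrB (hb ▸ hp.2)⟩
  have huH : G u ∈ H.target := ⟨huV, hb ▸ mem_ball_self hr⟩
  refine ⟨G.trans H.symm, V, hV, ⟨hu, huH⟩, ?_, fun _ => rfl,
    OpenPartialHomeomorph.univBall_symm_apply_center _ _⟩
  calc (G.trans H.symm).target = H.source ∩ H ⁻¹' G.target := rfl
    _ = H.source := inter_eq_left.2 fun p hp => hH (H.map_source hp)
    _ = V ×ˢ univ := congrArg (V ×ˢ ·) hb'

theorem isLocallyProductAt_pullback_fst [NormedAddCommGroup N] [NormedSpace ℝ N]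
    (G : OpenPartialHomeomorph U (W × N)) {P : X → W} (hP : Continuous P) {a : X} {u : U}
    (hu : u ∈ G.source) (hau : P a = (G u).1) :
    IsLocallyProductAt (N := N) {p : X × U | P p.1 = (G p.2).1} a u := by
  obtain ⟨G', V, hV, hu', hG', hfst, hsnd⟩ := exists_openPartialHomeomorph_target_eq_prod_univ G hu
  simp only [← hfst] at hau ⊢
  have haV : P a ∈ V := by
    have h : G' u ∈ V ×ˢ univ := hG' ▸ G'.map_source hu'
    exact hau ▸ h.1
  exact ⟨P ⁻¹' V, hV.preimage hP, haV, {p | p.2 ∈ G'.source ∧ P p.1 = (G' p.2).1},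
    fun p hp => hp.2, ⟨Prod.snd ⁻¹' G'.source, G'.open_source.preimage continuous_snd, rfl⟩,
    ⟨hu', hau⟩, pullbackHomeomorphOfTargetEq G' hG' hP, Prod.ext rfl hsnd⟩

end LocalProduct

theorem exists_openPartialHomeomorph_fst_eq_of_surjective {𝕜 V W N : Type*}
    [NontriviallyNormedField 𝕜] [CompleteSpace 𝕜]
    [NormedAddCommGroup V] [NormedSpace 𝕜 V] [FiniteDimensional 𝕜 V]
    [NormedAddCommGroup W] [NormedSpace 𝕜 W] [FiniteDimensional 𝕜 W]
    [NormedAddCommGroup N] [NormedSpace 𝕜 N] [FiniteDimensional 𝕜 N]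
    {f : V → W} {f' : V →L[𝕜] W} {v : V} (hf : HasStrictFDerivAt f f' v)
    (hf' : Function.Surjective f') (hN : finrank 𝕜 V = finrank 𝕜 W + finrank 𝕜 N) :
    ∃ G : OpenPartialHomeomorph V (W × N), v ∈ G.source ∧ ∀ x, (G x).1 = f x := by
  have := FiniteDimensional.complete 𝕜 V
  have hrange : f'.range = ⊤ := LinearMap.range_eq_top.2 hf'
  have hker : finrank 𝕜 f'.ker = finrank 𝕜 N := by
    have h := f'.toLinearMap.finrank_range_add_finrank_ker
    rw [hrange, finrank_top, hN] at h
    exact Nat.add_left_cancel h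
  let e : f'.ker ≃L[𝕜] N := ContinuousLinearEquiv.ofFinrankEq hker
  exact ⟨(hf.implicitToOpenPartialHomeomorph f f' hrange).transHomeomorph
    ((Homeomorph.refl W).prodCongr e.toHomeomorph),
    hf.mem_implicitToOpenPartialHomeomorph_source hrange,
    hf.implicitToOpenPartialHomeomorph_fst hrange⟩

theorem isLocallyProductAt_pullback_of_surjective {X V W N : Type*} [TopologicalSpace X]
    [NormedAddCommGroup V] [NormedSpace ℝ V] [FiniteDimensional ℝ V]
    [NormedAddCommGroup W] [NormedSpace ℝ W] [FiniteDimensional ℝ W]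
    [NormedAddCommGroup N] [NormedSpace ℝ N] [FiniteDimensional ℝ N]
    {f : V → W} {f' : V →L[ℝ] W} {v : V} (hf : HasStrictFDerivAt f f' v)
    (hf' : Function.Surjective f') (hN : finrank ℝ V = finrank ℝ W + finrank ℝ N)
    {P : X → W} (hP : Continuous P) {a : X} (hav : P a = f v) :
    IsLocallyProductAt (N := N) {p : X × V | P p.1 = f p.2} a v := by
  obtain ⟨G, hv, hG⟩ := exists_openPartialHomeomorph_fst_eq_of_surjective (N := N) hf hf' hN
  simp only [← hG] at hav ⊢
  exact isLocallyProductAt_pullback_fst G hP hv hav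

theorem codisjoint_orthogonal_of_disjoint {𝕜 E : Type*} [RCLike 𝕜] [NormedAddCommGroup E]
    [InnerProductSpace 𝕜 E] [FiniteDimensional 𝕜 E] {K L : Submodule 𝕜 E} (h : Disjoint K L) :
    Codisjoint Kᗮ Lᗮ := by
  rw [codisjoint_iff, ← Submodule.orthogonal_eq_bot_iff, ← Submodule.inf_orthogonal,
    K.orthogonal_orthogonal, L.orthogonal_orthogonal, h.eq_bot]

theorem disjoint_span_singleton_of_norm_eq {E : Type*} [NormedAddCommGroup E] [NormedSpace ℝ E]
    {p q : E} (hnorm : ‖q‖ = ‖p‖) (hne : q ≠ p) (hne_neg : q ≠ -p) :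
    Disjoint (Submodule.span ℝ {p}) (Submodule.span ℝ {q}) := by
  rw [Submodule.disjoint_span_singleton]
  intro hq
  obtain ⟨c, rfl⟩ := Submodule.mem_span_singleton.1 hq
  by_contra hq0
  have hp : ‖p‖ ≠ 0 := fun hp => hq0 (norm_eq_zero.1 (hnorm.trans hp))
  have hc : |c| = 1 := by
    rwa [norm_smul, Real.norm_eq_abs, mul_eq_right₀ hp] at hnorm
  rcases eq_or_eq_neg_of_abs_eq hc with rfl | rfl
  · exact hne (one_smul ℝ p)
  · exact hne_neg (neg_one_smul ℝ p)

section Chain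

variable {ι E : Type*} [NormedAddCommGroup E] [InnerProductSpace ℝ E]

/-- The vectors `u i` with `i ∈ s` agree up to sign with a common unit vector. -/
def IsAlignedOn (u : ι → E) (s : Set ι) : Prop :=
  ∃ w, ‖w‖ = 1 ∧ ∀ i ∈ s, u i = w ∨ u i = -w

theorem exists_disjoint_span_of_not_isAlignedOn [Nonempty ι] {u : ι → E} {s : Set ι}
    (hu : ∀ i, ‖u i‖ = 1) (h : ¬ IsAlignedOn u s) :
    ∃ i ∈ s, ∃ j ∈ s, Disjoint (Submodule.span ℝ {u i}) (Submodule.span ℝ {u j}) := by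
  obtain ⟨i, hi⟩ : s.Nonempty := by
    by_contra! hs
    exact h ⟨u (Classical.arbitrary ι), hu _, by simp [hs]⟩
  obtain ⟨j, hj, hne, hne_neg⟩ : ∃ j ∈ s, u j ≠ u i ∧ u j ≠ -u i := by
    by_contra! hs
    exact h ⟨u i, hu i, fun j hj => or_iff_not_imp_left.2 (hs j hj)⟩
  exact ⟨i, hi, j, hj, disjoint_span_singleton_of_norm_eq (by rw [hu, hu]) hne hne_neg⟩

variable [Fintype ι] (lam : ι → ℝ)

/-- The squared norms of the links together with the work map of the open chain, defined on all
tuples of vectors. Squares make the norm constraint smooth everywhere. -/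
def chainConstraint (u : ι → E) : (ι → ℝ) × E :=
  (fun i => ‖u i‖ ^ 2, ∑ i, lam i • u i)

/-- The derivative of `chainConstraint lam` at `u`. -/
noncomputable def chainConstraintDeriv (u : ι → E) : (ι → E) →L[ℝ] (ι → ℝ) × E :=
  (ContinuousLinearMap.pi fun i => (2 • innerSL ℝ (u i)).comp (.proj i)).prod
    (∑ i, lam i • .proj i)

variable {lam}

theorem one_prodMk_eq_chainConstraint_iff {u : ι → E} {y : E} :
    (1, y) = chainConstraint lam u ↔ (∀ i, ‖u i‖ = 1) ∧ y = ∑ i, lam i • u i := by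
  simp [chainConstraint, funext_iff, pow_eq_one_iff_of_nonneg, eq_comm (a := (1 : ℝ))]

theorem chainConstraintDeriv_apply (u v : ι → E) :
    chainConstraintDeriv lam u v = (fun i => 2 * inner ℝ (u i) (v i), ∑ i, lam i • v i) := by
  ext <;> simp [chainConstraintDeriv]

theorem hasStrictFDerivAt_chainConstraint (u : ι → E) :
    HasStrictFDerivAt (chainConstraint lam) (chainConstraintDeriv lam u) u := by
  refine .prodMk (hasStrictFDerivAt_pi.2 fun i => ?_) ?_
  · exact (hasStrictFDerivAt_norm_sq (u i)).comp u
      (hasStrictFDerivAt_apply (𝕜 := ℝ) i u)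
  · exact .fun_sum fun i _ => (hasStrictFDerivAt_apply i u).const_smul (lam i)

theorem chainConstraintDeriv_single [DecidableEq ι] {u : ι → E} {i : ι} {s : E}
    (hs : inner ℝ (u i) s = 0) :
    chainConstraintDeriv lam u (Pi.single i s) = (0, lam i • s) := by
  rw [chainConstraintDeriv_apply]
  refine Prod.ext (funext fun l => ?_) ?_
  · obtain rfl | hl := eq_or_ne l i
    · simp [hs]
    · simp [hl]
  · simp [Pi.single_apply]

theorem surjective_chainConstraintDeriv [FiniteDimensional ℝ E] {u : ι → E} (hu : ∀ l, u l ≠ 0)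
    {i j : ι} (hi : lam i ≠ 0) (hj : lam j ≠ 0)
    (hij : Disjoint (Submodule.span ℝ {u i}) (Submodule.span ℝ {u j})) :
    Function.Surjective (chainConstraintDeriv lam u) := by
  classical
  rintro ⟨c, e⟩
  let radial : ι → E := fun l => (c l / (2 * ‖u l‖ ^ 2)) • u l
  obtain ⟨s, hs, t, ht, hst⟩ : ∃ s ∈ (Submodule.span ℝ {u i})ᗮ, ∃ t ∈ (Submodule.span ℝ {u j})ᗮ,
      s + t = e - ∑ l, lam l • radial l :=
    Submodule.mem_sup.1 ((codisjoint_orthogonal_of_disjoint hij).eq_top ▸ Submodule.mem_top)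
  rw [Submodule.mem_orthogonal_singleton_iff_inner_right] at hs ht
  have hradial : chainConstraintDeriv lam u radial = (c, ∑ l, lam l • radial l) := by
    rw [chainConstraintDeriv_apply]
    refine Prod.ext (funext fun l => ?_) rfl
    have := norm_ne_zero_iff.2 (hu l)
    simp only [radial, inner_smul_right, real_inner_self_eq_norm_sq]
    field_simp
  have hsingle {m : ι} {r : E} (hm : lam m ≠ 0) (hr : inner ℝ (u m) r = 0) :
      chainConstraintDeriv lam u (Pi.single m ((lam m)⁻¹ • r)) = (0, r) := by
    rw [chainConstraintDeriv_single (by rw [inner_smul_right, hr, mul_zero]), smul_inv_smul₀ hm]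
  refine ⟨radial + Pi.single i ((lam i)⁻¹ • s) + Pi.single j ((lam j)⁻¹ • t), ?_⟩
  rw [map_add, map_add, hradial, hsingle hi hs, hsingle hj ht]
  simp [add_assoc, hst]

end Chain

theorem one_lt_finrank_of_disjoint_span_singleton {K V : Type*} [DivisionRing K] [AddCommGroup V]
    [Module K V] [FiniteDimensional K V] {p q : V} (hp : p ≠ 0) (hq : q ≠ 0)
    (h : Disjoint (Submodule.span K {p}) (Submodule.span K {q})) : 1 < finrank K V := by
  have := Submodule.finrank_add_finrank_le_of_disjoint h
  rwa [finrank_span_singleton hp, finrank_span_singleton hq] at this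

theorem finrank_pi_eq_finrank_prod_add {K ι V : Type*} [DivisionRing K] [Fintype ι] [Nontrivial ι]
    [AddCommGroup V] [Module K V] (hV : 1 < finrank K V) :
    finrank K (ι → V) =
      finrank K ((ι → K) × V) + (Fintype.card ι * (finrank K V - 1) - finrank K V) := by
  have := finite_of_finrank_pos (zero_lt_one.trans hV)
  obtain ⟨m, hm⟩ := Nat.exists_eq_add_of_lt hV
  have hcard : 2 * (m + 1) ≤ Fintype.card ι * (m + 1) :=
    Nat.mul_le_mul_right _ Fintype.one_lt_card
  simp only [finrank_pi_fintype, finrank_prod, Finset.sum_const, Finset.card_univ, smul_eq_mul,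
    finrank_self, hm]
  simp only [Nat.add_sub_cancel_left, add_assoc, mul_add] at hcard ⊢
  lia

theorem stmt_11_general {ι E X N : Type*} [Fintype ι] [Nonempty ι]
    [NormedAddCommGroup E] [InnerProductSpace ℝ E] [FiniteDimensional ℝ E] [TopologicalSpace X]
    [NormedAddCommGroup N] [NormedSpace ℝ N] [FiniteDimensional ℝ N]
    (hN : finrank ℝ N = Fintype.card ι * (finrank ℝ E - 1) - finrank ℝ E)
    {lam : ι → ℝ} {a : X} {Ψ : X → E} (hΨ : Continuous Ψ) {u0 : ι → E} (hu0 : ∀ i, ‖u0 i‖ = 1)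
    (hna : ¬ IsAlignedOn u0 (Function.support lam)) (hmatch : ∑ i, lam i • u0 i = Ψ a) :
    IsLocallyProductAt (N := N)
      {p : X × (ι → E) | (∀ i, ‖p.2 i‖ = 1) ∧ Ψ p.1 = ∑ i, lam i • p.2 i} a u0 := by
  have hne (l : ι) : u0 l ≠ 0 := norm_ne_zero_iff.1 (hu0 l ▸ one_ne_zero)
  obtain ⟨i, hi, j, hj, hij⟩ := exists_disjoint_span_of_not_isAlignedOn hu0 hna
  have : Nontrivial ι := ⟨i, j, by rintro rfl; simp [hne i] at hij⟩
  have hE : 1 < finrank ℝ E := one_lt_finrank_of_disjoint_span_singleton (hne i) (hne j) hij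
  have hdim : finrank ℝ (ι → E) = finrank ℝ ((ι → ℝ) × E) + finrank ℝ N :=
    hN ▸ finrank_pi_eq_finrank_prod_add hE
  simp only [← one_prodMk_eq_chainConstraint_iff]
  exact isLocallyProductAt_pullback_of_surjective (hasStrictFDerivAt_chainConstraint u0)
    (surjective_chainConstraintDeriv hne hi hj hij) hdim
    (P := fun x => (1, Ψ x)) (by fun_prop) (one_prodMk_eq_chainConstraint_iff.2 ⟨hu0, hmatch.symm⟩)

theorem stmt_11 (d k : ℕ) (hd : 2 ≤ d) (hk : 1 ≤ k)
    (lam : Fin k → ℝ) (hlam : ∀ i, 0 < lam i)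
    (X : Type) [TopologicalSpace X] (a : X)
    (Ψ : X → EuclideanSpace ℝ (Fin d)) (hΨ : Continuous Ψ)
    (u0 : Fin k → EuclideanSpace ℝ (Fin d)) (hu0 : ∀ i, ‖u0 i‖ = 1)
    (hna : ¬ ∃ w : EuclideanSpace ℝ (Fin d), ‖w‖ = 1 ∧
      ∀ i, u0 i = w ∨ u0 i = -w)
    (hmatch : ∑ i, lam i • u0 i = Ψ a)
    (Z : Set (X × (Fin k → EuclideanSpace ℝ (Fin d))))
    (hZ : Z = {p | (∀ i, ‖p.2 i‖ = 1) ∧ Ψ p.1 = ∑ i, lam i • p.2 i}) :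
    ∃ A : Set X, IsOpen A ∧
    ∃ (hA : a ∈ A)
      (Nb : Set (X × (Fin k → EuclideanSpace ℝ (Fin d)))),
      Nb ⊆ Z ∧ (∃ O, IsOpen O ∧ Nb = O ∩ Z) ∧
    ∃ (hmem : (a, u0) ∈ Nb)
      (h : ↥Nb ≃ₜ ↥A × EuclideanSpace ℝ (Fin (k * (d - 1) - d))),
      h ⟨(a, u0), hmem⟩ = (⟨a, hA⟩, 0) := by
  have : Nonempty (Fin k) := ⟨⟨0, hk⟩⟩
  exact hZ ▸ stmt_11_general (by simp) hΨ hu0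
    (by simpa [IsAlignedOn, (hlam _).ne'] using hna) hmatch
end
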